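/- The range of the function ξ ↦ w_2(ξ) − w_2*(ξ) is exactly the closed interval [0,1]; that is, for every ξ ∈ F_q((T^{-1})) with w_2(ξ) finite one has 0 ≤ w_2(ξ) − w_2*(ξ) ≤ 1, and conversely for every real δ ∈ [0,1] there exists ξ ∈ F_q((T^{-1})) with w_2(ξ) and w_2*(ξ) finite and w_2(ξ) − w_2*(ξ) = δ. -/

import Mathlib

open Polynomial Filter
open scoped ENNReal

noncomputable section

namespace Ooto

variable (Fq : Type) [Field Fq] [Fintype Fq]

/-- `F_q((T⁻¹))`, realized as formal Laurent series in the variable `X = T⁻¹`. -/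
abbrev K := LaurentSeries Fq

/-- The element `T = X⁻¹` of `F_q((T⁻¹))`. -/
def TT : K Fq := HahnSeries.single (-1 : ℤ) (1 : Fq)

/-- The natural embedding of `F_q[T]` into `F_q((T⁻¹))`, sending `T` to `T`. -/
def polyToK : Polynomial Fq →+* K Fq := Polynomial.eval₂RingHom HahnSeries.C (TT Fq)

open Classical in
/-- The absolute value on `F_q((T⁻¹))`: `|0| = 0` and `|ξ| = q^{-N}` where `N` is the order
of `ξ` as a series in `T⁻¹`. -/
def kabs (f : K Fq) : ℝ := if f = 0 then 0 else (Fintype.card Fq : ℝ) ^ (-f.order)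

/-- A fixed algebraic closure of `F_q((T⁻¹))`. -/
abbrev L := AlgebraicClosure (K Fq)

def toL : K Fq →+* L Fq := algebraMap (K Fq) (L Fq)

def φ : Polynomial Fq →+* L Fq := (toL Fq).comp (polyToK Fq)

/-- Evaluation of `P ∈ (F_q[T])[X]` at `ξ ∈ F_q((T⁻¹))`. -/
def evalK (P : Polynomial (Polynomial Fq)) (ξ : K Fq) : K Fq :=
  Polynomial.eval₂ (polyToK Fq) ξ P

/-- Evaluation of `P ∈ (F_q[T])[X]` at a point of the algebraic closure. -/
def evalL (P : Polynomial (Polynomial Fq)) (α : L Fq) : L Fq :=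
  Polynomial.eval₂ (φ Fq) α P

/-- Height of a polynomial over `F_q[T]`: the maximum of the absolute values of its
coefficients. -/
def Hpoly (P : Polynomial (Polynomial Fq)) : ℝ := ⨆ i : ℕ, kabs Fq (polyToK Fq (P.coeff i))

/-- `P` is the minimal polynomial of `α`: a non-constant irreducible primitive polynomial in
`(F_q[T])[X]` whose leading coefficient is monic in `T`, vanishing at `α`. -/
def IsMinPolyOf (P : Polynomial (Polynomial Fq)) (α : L Fq) : Prop :=
  0 < P.natDegree ∧ Irreducible P ∧ P.IsPrimitive ∧ (P.leadingCoeff).Monic ∧ evalL Fq P α = 0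

/-- `α` is algebraic over `F_q(T)`. -/
def IsAlgElem (α : L Fq) : Prop := ∃ P, IsMinPolyOf Fq P α

open Classical in
/-- The minimal polynomial of an algebraic element (junk value `0` otherwise). -/
def minPolyPrim (α : L Fq) : Polynomial (Polynomial Fq) :=
  if h : IsAlgElem Fq α then h.choose else 0

/-- Degree of an algebraic element. -/
def degAlg (α : L Fq) : ℕ := (minPolyPrim Fq α).natDegree

/-- Height of an algebraic element. -/
def heightAlg (α : L Fq) : ℝ := Hpoly Fq (minPolyPrim Fq α)

/-- Inseparable degree of a polynomial `P ∈ (F_q[T])[X]`: the largest power `f = p^j` of the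
characteristic such that `P(X) = R(X^f)` for some `R`. -/
def insepDeg (P : Polynomial (Polynomial Fq)) : ℕ :=
  (ringChar Fq) ^ sSup {j : ℕ | ∃ R : Polynomial (Polynomial Fq),
    P = R.comp (Polynomial.X ^ (ringChar Fq) ^ j)}

/-- Inseparable degree of an algebraic element. -/
def insepAlg (α : L Fq) : ℕ := insepDeg Fq (minPolyPrim Fq α)

/-- `α'` is the Galois conjugate of the quadratic element `α` (equal to `α` itself in the
inseparable case): the minimal polynomial of `α` factors as `A(X - α)(X - α')`. -/
def IsConjOf (α' α : L Fq) : Prop :=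
  (minPolyPrim Fq α).natDegree = 2 ∧
  (minPolyPrim Fq α).map (φ Fq) =
    Polynomial.C (φ Fq (minPolyPrim Fq α).leadingCoeff) *
      (Polynomial.X - Polynomial.C α) * (Polynomial.X - Polynomial.C α')

/-- `v` is an absolute value on the algebraic closure of `F_q((T⁻¹))` extending `kabs`
(such an extension exists and is unique). -/
structure IsAbsExt (v : L Fq → ℝ) : Prop where
  eq_zero_iff : ∀ x, v x = 0 ↔ x = 0
  map_mul : ∀ x y, v (x * y) = v x * v y
  add_le : ∀ x y, v (x + y) ≤ max (v x) (v y)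
  nonneg : ∀ x, 0 ≤ v x
  extends_kabs : ∀ f : K Fq, v (toL Fq f) = kabs Fq f

/-- The exponent `w_n(ξ)`: the supremum of the real numbers `w` such that
`0 < |P(ξ)| ≤ H(P)^{-w}` for infinitely many `P ∈ (F_q[T])[X]` of degree at most `n`. -/
def wExp (n : ℕ) (ξ : K Fq) : EReal :=
  sSup {x : EReal | ∃ w : ℝ, x = (w : EReal) ∧
    {P : Polynomial (Polynomial Fq) | P.natDegree ≤ n ∧ 0 < kabs Fq (evalK Fq P ξ) ∧
      kabs Fq (evalK Fq P ξ) ≤ Hpoly Fq P ^ (-w)}.Infinite}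

/-- The exponent `w_n^*(ξ)`: the supremum of the real numbers `w` such that
`0 < |ξ - α| ≤ H(α)^{-w-1}` for infinitely many algebraic `α` of degree at most `n`. -/
def wStarExp (v : L Fq → ℝ) (n : ℕ) (ξ : K Fq) : EReal :=
  sSup {x : EReal | ∃ w : ℝ, x = (w : EReal) ∧
    {α : L Fq | IsAlgElem Fq α ∧ degAlg Fq α ≤ n ∧ 0 < v (toL Fq ξ - α) ∧
      v (toL Fq ξ - α) ≤ heightAlg Fq α ^ (-w - 1)}.Infinite}

/-- `pSeq a n = p_{n-1}`, the numerators of the convergents of `[a 0; a 1, a 2, …]`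
(with `p_{-1} = 1`). -/
def pSeq (a : ℕ → Polynomial Fq) : ℕ → Polynomial Fq
  | 0 => 1
  | 1 => a 0
  | (n+2) => a (n+1) * pSeq a (n+1) + pSeq a n

/-- `qSeq a n = q_{n-1}`, the denominators of the convergents of `[a 0; a 1, a 2, …]`
(with `q_{-1} = 0`). -/
def qSeq (a : ℕ → Polynomial Fq) : ℕ → Polynomial Fq
  | 0 => 0
  | 1 => 1
  | (n+2) => a (n+1) * qSeq a (n+1) + qSeq a n

/-- `ξ` has continued fraction expansion `[a 0; a 1, a 2, …]`: each partial quotient `a n`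
(`n ≥ 1`) has degree at least one and `|ξ - p_n/q_n| = |q_n|⁻¹|q_{n+1}|⁻¹` for all `n ≥ 0`. -/
def IsCFOf (ξ : K Fq) (a : ℕ → Polynomial Fq) : Prop :=
  (∀ n, 1 ≤ n → 1 ≤ (a n).natDegree) ∧
  ∀ n : ℕ,
    kabs Fq (ξ - polyToK Fq (pSeq Fq a (n+1)) / polyToK Fq (qSeq Fq a (n+1))) =
      (kabs Fq (polyToK Fq (qSeq Fq a (n+1))) * kabs Fq (polyToK Fq (qSeq Fq a (n+2))))⁻¹

/-- The sequence of partial quotients of `[0; b 0, b 1, b 2, …]`. -/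
def cfA (b : ℕ → Polynomial Fq) : ℕ → Polynomial Fq := fun n => if n = 0 then 0 else b (n - 1)

/-- `qden b n` is the denominator `q_n` of the `n`-th convergent of `[0; b 0, b 1, …]`. -/
def qden (b : ℕ → Polynomial Fq) (n : ℕ) : Polynomial Fq := qSeq Fq (cfA Fq b) (n + 1)

/-- `V^w` for a finite word `V` and a real `w ≥ 0`: `⌊w⌋` copies of `V` followed by the prefix
of `V` of length `⌈(w - ⌊w⌋)|V|⌉`. -/
def wordPow {A : Type*} (V : List A) (w : ℝ) : List A :=
  (List.replicate ⌊w⌋₊ V).flatten ++ V.take ⌈(w - ⌊w⌋₊) * V.length⌉₊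

/-- The finite word `l` is a prefix of the infinite word `b`. -/
def IsPrefixOfSeq {A : Type*} (l : List A) (b : ℕ → A) : Prop :=
  ∀ (i : ℕ) (h : i < l.length), l.get ⟨i, h⟩ = b i

/-- Condition `(*)_ρ` for an infinite word. -/
def SatisfiesCond {A : Type*} (b : ℕ → A) (ρ : ℝ) : Prop :=
  ∃ (U V : ℕ → List A) (w : ℕ → ℝ),
    (∀ n, V n ≠ []) ∧ (∀ n, 0 ≤ w n) ∧
    (∀ n, IsPrefixOfSeq (U n ++ wordPow (V n) (w n)) b) ∧
    (∀ n, ρ * (((U n).length + (V n).length : ℕ) : ℝ) ≤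
      (((U n).length + (wordPow (V n) (w n)).length : ℕ) : ℝ)) ∧
    StrictMono fun n => (wordPow (V n) (w n)).length

/-- The Diophantine exponent of an infinite word: the supremum of the `ρ` such that the word
satisfies Condition `(*)_ρ`. -/
def dioExp {A : Type*} (b : ℕ → A) : EReal :=
  sSup {x : EReal | ∃ ρ : ℝ, x = (ρ : EReal) ∧ SatisfiesCond b ρ}

/-- The complexity function: the number of distinct blocks of `n` consecutive letters. -/
def complexity {A : Type*} (b : ℕ → A) (n : ℕ) : ℕ∞ :=
  {w : Fin n → A | ∃ i : ℕ, ∀ k : Fin n, w k = b (i + k)}.encard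

/-- The infinite word `b` is ultimately periodic. -/
def UltimatelyPeriodic {A : Type*} (b : ℕ → A) : Prop :=
  ∃ N T : ℕ, 0 < T ∧ ∀ n, N ≤ n → b (n + T) = b n



set_option linter.unusedSectionVars false

section PartA
variable {Fq}

lemma one_lt_card : (1 : ℝ) < (Fintype.card Fq : ℝ) := by
  exact_mod_cast Fintype.one_lt_card

lemma kabs_zero : kabs Fq 0 = 0 := by simp [kabs]

lemma kabs_of_ne {f : K Fq} (h : f ≠ 0) : kabs Fq f = (Fintype.card Fq : ℝ) ^ (-f.order) := by
  simp [kabs, h]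

lemma kabs_pos {f : K Fq} (h : f ≠ 0) : 0 < kabs Fq f := by
  rw [kabs_of_ne h]
  have := one_lt_card (Fq := Fq)
  positivity

lemma kabs_nonneg (f : K Fq) : 0 ≤ kabs Fq f := by
  by_cases h : f = 0
  · simp [h, kabs_zero]
  · exact (kabs_pos h).le

lemma kabs_eq_zero {f : K Fq} : kabs Fq f = 0 ↔ f = 0 := by
  constructor
  · intro h
    by_contra h'
    exact (kabs_pos h').ne' h
  · rintro rfl; exact kabs_zero

lemma kabs_pos_iff {f : K Fq} : 0 < kabs Fq f ↔ f ≠ 0 :=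
  ⟨fun h h' => by rw [h', kabs_zero] at h; exact lt_irrefl _ h, kabs_pos⟩

lemma kabs_mul (f g : K Fq) : kabs Fq (f * g) = kabs Fq f * kabs Fq g := by
  by_cases hf : f = 0
  · simp [hf, kabs_zero]
  by_cases hg : g = 0
  · simp [hg, kabs_zero]
  have hq := one_lt_card (Fq := Fq)
  rw [kabs_of_ne hf, kabs_of_ne hg, kabs_of_ne (mul_ne_zero hf hg), HahnSeries.order_mul hf hg,
    ← zpow_add₀ (by positivity)]
  congr 1; ring

lemma kabs_add_le (f g : K Fq) : kabs Fq (f + g) ≤ max (kabs Fq f) (kabs Fq g) := by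
  by_cases hf : f = 0
  · simp [hf, kabs_zero]
  by_cases hg : g = 0
  · simp [hg, kabs_zero]
  by_cases hfg : f + g = 0
  · simp [hfg, kabs_zero, kabs_nonneg]
  have hq := one_lt_card (Fq := Fq)
  rw [kabs_of_ne hf, kabs_of_ne hg, kabs_of_ne hfg]
  have := HahnSeries.min_order_le_order_add hfg
  rcases min_le_iff.1 this with h | h
  · exact le_max_of_le_left (zpow_le_zpow_right₀ hq.le (by lia))
  · exact le_max_of_le_right (zpow_le_zpow_right₀ hq.le (by lia))

lemma kabs_one : kabs Fq 1 = 1 := by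
  rw [kabs_of_ne one_ne_zero]; simp

lemma kabs_neg (f : K Fq) : kabs Fq (-f) = kabs Fq f := by
  by_cases hf : f = 0
  · simp [hf]
  rw [kabs_of_ne hf, kabs_of_ne (neg_ne_zero.2 hf), HahnSeries.order_neg]

lemma kabs_sub_le (f g : K Fq) : kabs Fq (f - g) ≤ max (kabs Fq f) (kabs Fq g) := by
  rw [sub_eq_add_neg, ← kabs_neg g]; exact kabs_add_le _ _

lemma kabs_sub_comm (f g : K Fq) : kabs Fq (f - g) = kabs Fq (g - f) := by
  rw [← kabs_neg, neg_sub]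

lemma kabs_pow (f : K Fq) (n : ℕ) : kabs Fq (f ^ n) = kabs Fq f ^ n := by
  induction n with
  | zero => simp [kabs_one]
  | succ n ih => rw [pow_succ, pow_succ, kabs_mul, ih]

lemma kabs_inv (f : K Fq) : kabs Fq (f⁻¹) = (kabs Fq f)⁻¹ := by
  by_cases hf : f = 0
  · simp [hf, kabs_zero]
  apply eq_inv_of_mul_eq_one_left
  rw [← kabs_mul, inv_mul_cancel₀ hf, kabs_one]

lemma kabs_div (f g : K Fq) : kabs Fq (f / g) = kabs Fq f / kabs Fq g := by
  rw [div_eq_mul_inv, kabs_mul, kabs_inv, div_eq_mul_inv]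

lemma kabs_add_eq {f g : K Fq} (h : kabs Fq g < kabs Fq f) : kabs Fq (f + g) = kabs Fq f := by
  apply le_antisymm
  · exact (kabs_add_le f g).trans (by simp [h.le])
  · have := kabs_sub_le (f + g) g
    rw [add_sub_cancel_right] at this
    rcases le_max_iff.1 this with h1 | h1
    · exact h1
    · exact absurd h1 (not_le.2 h)

lemma kabs_sub_eq {f g : K Fq} (h : kabs Fq g < kabs Fq f) : kabs Fq (f - g) = kabs Fq f := by
  rw [sub_eq_add_neg]; exact kabs_add_eq (by rwa [kabs_neg])

lemma kabs_T : kabs Fq (TT Fq) = (Fintype.card Fq : ℝ) := by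
  have h : TT Fq ≠ 0 := by simp [TT]
  rw [kabs_of_ne h, TT, HahnSeries.order_single one_ne_zero]; simp

lemma kabs_C {c : Fq} (h : c ≠ 0) : kabs Fq (HahnSeries.C c) = 1 := by
  have h' : (HahnSeries.C c : K Fq) ≠ 0 := by
    simpa using h
  rw [kabs_of_ne h', HahnSeries.order_C]; simp

lemma kabs_C_le (c : Fq) : kabs Fq (HahnSeries.C c) ≤ 1 := by
  by_cases h : c = 0
  · simp [h, kabs_zero]
  · rw [kabs_C h]

lemma polyToK_X : polyToK Fq X = TT Fq := by simp [polyToK]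
lemma polyToK_C (c : Fq) : polyToK Fq (C c) = HahnSeries.C c := by simp [polyToK]

/-- absolute value on polynomials -/
def nb (A : Fq[X]) : ℝ := kabs Fq (polyToK Fq A)

lemma nb_zero : nb (0 : Fq[X]) = 0 := by simp [nb, kabs_zero]
lemma nb_one : nb (1 : Fq[X]) = 1 := by simp [nb, kabs_one]
lemma nb_mul (A B : Fq[X]) : nb (A * B) = nb A * nb B := by simp [nb, kabs_mul]
lemma nb_pow (A : Fq[X]) (n : ℕ) : nb (A ^ n) = nb A ^ n := by simp [nb, kabs_pow]
lemma nb_neg (A : Fq[X]) : nb (-A) = nb A := by simp [nb, kabs_neg]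
lemma nb_add_le (A B : Fq[X]) : nb (A + B) ≤ max (nb A) (nb B) := by
  simp only [nb, map_add]; exact kabs_add_le _ _
lemma nb_sub_le (A B : Fq[X]) : nb (A - B) ≤ max (nb A) (nb B) := by
  simp only [nb, map_sub]; exact kabs_sub_le _ _
lemma nb_nonneg (A : Fq[X]) : 0 ≤ nb A := kabs_nonneg _
lemma nb_X : nb (X : Fq[X]) = Fintype.card Fq := by rw [nb, polyToK_X, kabs_T]
lemma nb_C {c : Fq} (h : c ≠ 0) : nb (C c) = 1 := by rw [nb, polyToK_C, kabs_C h]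
lemma nb_C_le (c : Fq) : nb (C c) ≤ 1 := by rw [nb, polyToK_C]; exact kabs_C_le c

lemma nb_le_natDegree (A : Fq[X]) : nb A ≤ (Fintype.card Fq : ℝ) ^ A.natDegree := by
  have hq := one_lt_card (Fq := Fq)
  suffices ∀ n, ∀ A : Fq[X], A.natDegree ≤ n → nb A ≤ (Fintype.card Fq : ℝ) ^ n from this _ _ le_rfl
  intro n
  induction n with
  | zero =>
    intro A hA
    rw [Polynomial.eq_C_of_natDegree_le_zero hA]
    simpa using nb_C_le _
  | succ n ih =>
    intro A hA
    rw [← Polynomial.divX_mul_X_add A]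
    refine (nb_add_le _ _).trans (max_le ?_ ?_)
    · rw [nb_mul, nb_X, pow_succ]
      refine mul_le_mul_of_nonneg_right (ih _ ?_) (by positivity)
      rw [Polynomial.natDegree_divX_eq_natDegree_tsub_one]; lia
    · exact (nb_C_le _).trans (one_le_pow₀ hq.le)

lemma nb_eq {A : Fq[X]} (h : A ≠ 0) : nb A = (Fintype.card Fq : ℝ) ^ A.natDegree := by
  have hq := one_lt_card (Fq := Fq)
  by_cases hd : A.natDegree = 0
  · rw [Polynomial.eq_C_of_natDegree_eq_zero hd] at h ⊢
    simp only [natDegree_C, pow_zero]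
    exact nb_C (by simpa using h)
  have hlc : A.leadingCoeff ≠ 0 := by simpa using h
  have e := Polynomial.eraseLead_add_C_mul_X_pow A
  have h1 : nb (C A.leadingCoeff * X ^ A.natDegree) = (Fintype.card Fq : ℝ) ^ A.natDegree := by
    rw [nb_mul, nb_pow, nb_X, nb_C hlc, one_mul]
  have h2 : nb A.eraseLead < (Fintype.card Fq : ℝ) ^ A.natDegree := by
    refine (nb_le_natDegree _).trans_lt (pow_lt_pow_right₀ hq ?_)
    have := A.eraseLead_natDegree_le
    lia
  rw [← h1] at h2
  have := kabs_add_eq (f := polyToK Fq (C A.leadingCoeff * X ^ A.natDegree))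
    (g := polyToK Fq A.eraseLead) h2
  rw [← map_add, add_comm, e] at this
  exact this.trans h1

lemma nb_ge_one {A : Fq[X]} (h : A ≠ 0) : 1 ≤ nb A := by
  rw [nb_eq h]; exact one_le_pow₀ (one_lt_card (Fq := Fq)).le

lemma nb_eq_zero {A : Fq[X]} : nb A = 0 ↔ A = 0 := by
  constructor
  · intro h
    by_contra h'
    linarith [nb_ge_one h']
  · rintro rfl; exact nb_zero

lemma polyToK_inj : Function.Injective (polyToK Fq) := by
  rw [injective_iff_map_eq_zero]
  intro A h
  apply nb_eq_zero.1
  rw [nb, h, kabs_zero]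

lemma φ_inj : Function.Injective (φ Fq) := by
  intro x y h
  exact polyToK_inj ((algebraMap (K Fq) (L Fq)).injective h)

def nbA : AbsoluteValue Fq[X] ℝ where
  toFun := nb
  map_mul' := nb_mul
  nonneg' := nb_nonneg
  eq_zero' _ := nb_eq_zero
  add_le' A B := (nb_add_le A B).trans (max_le_add_of_nonneg (nb_nonneg _) (nb_nonneg _))

lemma nb_le_gauss (P : Fq[X][X]) (i : ℕ) : nb (P.coeff i) ≤ P.gaussNorm nbA 1 := by
  have h := P.le_gaussNorm (c := 1) nbA zero_le_one i
  rw [one_pow, mul_one] at h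
  exact h

lemma Hpoly_bdd (P : Fq[X][X]) : BddAbove (Set.range fun i : ℕ => nb (P.coeff i)) := by
  refine ⟨P.gaussNorm nbA 1, ?_⟩
  rintro _ ⟨i, rfl⟩
  exact nb_le_gauss P i

lemma Hpoly_eq_gauss (P : Fq[X][X]) : Hpoly Fq P = P.gaussNorm nbA 1 := by
  apply le_antisymm
  · exact ciSup_le fun i => nb_le_gauss P i
  · obtain ⟨i, hi⟩ := P.exists_eq_gaussNorm nbA 1
    rw [hi, one_pow, mul_one]
    exact le_ciSup (Hpoly_bdd P) i

lemma nb_coeff_le (P : Fq[X][X]) (i : ℕ) : nb (P.coeff i) ≤ Hpoly Fq P :=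
  le_ciSup (Hpoly_bdd P) i

lemma Hpoly_le {P : Fq[X][X]} {B : ℝ} (h : ∀ i, nb (P.coeff i) ≤ B) : Hpoly Fq P ≤ B :=
  ciSup_le h

lemma Hpoly_nonneg (P : Fq[X][X]) : 0 ≤ Hpoly Fq P := (nb_nonneg _).trans (nb_coeff_le P 0)

lemma Hpoly_ge_one {P : Fq[X][X]} (h : P ≠ 0) : 1 ≤ Hpoly Fq P :=
  (nb_ge_one (leadingCoeff_ne_zero.2 h)).trans (nb_coeff_le P P.natDegree)

lemma Hpoly_mul (P Q : Fq[X][X]) : Hpoly Fq (P * Q) = Hpoly Fq P * Hpoly Fq Q := by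
  simp only [Hpoly_eq_gauss]
  refine Polynomial.gaussNorm_mul ?_ one_pos P Q
  intro A B
  exact nb_add_le A B

lemma Hpoly_C (A : Fq[X]) : Hpoly Fq (C A) = nb A := by
  rw [Hpoly_eq_gauss, Polynomial.gaussNorm_C]; rfl

lemma finite_natDegree_le (n : ℕ) : {A : Fq[X] | A.natDegree ≤ n}.Finite := by
  have : Finite (degreeLT Fq (n+1)) := Finite.of_equiv _ (degreeLTEquiv Fq (n+1)).toEquiv.symm
  refine (Set.toFinite (degreeLT Fq (n+1) : Set Fq[X])).subset ?_
  intro A hA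
  simp only [SetLike.mem_coe, mem_degreeLT]
  exact lt_of_le_of_lt degree_le_natDegree (by exact_mod_cast Nat.lt_succ_of_le hA)

lemma finite_nb_le (B : ℝ) : {A : Fq[X] | nb A ≤ B}.Finite := by
  obtain ⟨n, hn⟩ := pow_unbounded_of_one_lt B (one_lt_card (Fq := Fq))
  refine (finite_natDegree_le n).subset ?_
  intro A hA
  by_cases h : A = 0
  · simp [h]
  simp only [Set.mem_ofPred_eq] at hA ⊢
  rw [nb_eq h] at hA
  by_contra hc
  have := pow_lt_pow_right₀ (one_lt_card (Fq := Fq)) (not_le.1 hc)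
  linarith

lemma poly2_ext {P Q : Fq[X][X]} (hP : P.natDegree ≤ 2) (hQ : Q.natDegree ≤ 2)
    (h0 : P.coeff 0 = Q.coeff 0) (h1 : P.coeff 1 = Q.coeff 1) (h2 : P.coeff 2 = Q.coeff 2) :
    P = Q := by
  ext1 i
  rcases i with _ | _ | _ | i
  · exact h0
  · exact h1
  · exact h2
  · rw [coeff_eq_zero_of_natDegree_lt (by lia), coeff_eq_zero_of_natDegree_lt (by lia)]

lemma finite_Hpoly_le (B : ℝ) : {P : Fq[X][X] | P.natDegree ≤ 2 ∧ Hpoly Fq P ≤ B}.Finite := by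
  have hf := finite_nb_le (Fq := Fq) B
  have h3 := (hf.prod (hf.prod hf))
  refine Set.Finite.of_finite_image (f := fun P => (P.coeff 0, P.coeff 1, P.coeff 2))
    (h3.subset ?_) ?_
  · rintro _ ⟨P, ⟨_, hP⟩, rfl⟩
    refine ⟨(nb_coeff_le P 0).trans hP, (nb_coeff_le P 1).trans hP, (nb_coeff_le P 2).trans hP⟩
  · intro P hP Q hQ h
    simp only [Prod.mk.injEq] at h
    exact poly2_ext hP.1 hQ.1 h.1 h.2.1 h.2.2

lemma evalK_mul (P Q : Fq[X][X]) (ξ : K Fq) : evalK Fq (P * Q) ξ = evalK Fq P ξ * evalK Fq Q ξ :=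
  eval₂_mul _ _

lemma evalL_toL (P : Fq[X][X]) (ξ : K Fq) : evalL Fq P (toL Fq ξ) = toL Fq (evalK Fq P ξ) := by
  rw [evalL, evalK, φ, Polynomial.hom_eval₂]

lemma eq_quad {P : Fq[X][X]} (h : P.natDegree ≤ 2) :
    P = C (P.coeff 2) * X ^ 2 + C (P.coeff 1) * X + C (P.coeff 0) :=
  eq_quadratic_of_degree_le_two (natDegree_le_iff_degree_le.1 h)

lemma evalK_quad {P : Fq[X][X]} (h : P.natDegree ≤ 2) (ξ : K Fq) :
    evalK Fq P ξ = polyToK Fq (P.coeff 2) * ξ ^ 2 + polyToK Fq (P.coeff 1) * ξ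
      + polyToK Fq (P.coeff 0) := by
  conv_lhs => rw [eq_quad h]
  simp [evalK]

lemma evalL_quad {P : Fq[X][X]} (h : P.natDegree ≤ 2) (ξ : L Fq) :
    evalL Fq P ξ = φ Fq (P.coeff 2) * ξ ^ 2 + φ Fq (P.coeff 1) * ξ
      + φ Fq (P.coeff 0) := by
  conv_lhs => rw [eq_quad h]
  simp [evalL]

end PartA

section PartB
variable {Fq}

lemma assoc_of_common_root {P Q : Fq[X][X]} (hP : Irreducible P) (hQ : Irreducible Q)
    (hP0 : P.natDegree ≠ 0) (hQ0 : Q.natDegree ≠ 0) {α : L Fq}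
    (h1 : evalL Fq P α = 0) (h2 : evalL Fq Q α = 0) : Associated P Q := by
  let k := FractionRing Fq[X]
  let ψ : k →+* L Fq := IsFractionRing.lift (φ_inj (Fq := Fq))
  have hψ : ψ.comp (algebraMap Fq[X] k) = φ Fq := by
    apply RingHom.ext
    intro x
    simp [ψ]
  have hPp := hP.isPrimitive hP0
  have hQp := hQ.isPrimitive hQ0
  have hPi : Irreducible (P.map (algebraMap Fq[X] k)) :=
    hPp.irreducible_iff_irreducible_map_fraction_map.1 hP
  have ev : ∀ R : Fq[X][X], eval₂ ψ α (R.map (algebraMap Fq[X] k)) = evalL Fq R α := by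
    intro R
    rw [eval₂_map, hψ, evalL]
  have hd : P.map (algebraMap Fq[X] k) ∣ Q.map (algebraMap Fq[X] k) := by
    by_contra hnd
    obtain ⟨a, b, hab⟩ := (Irreducible.coprime_iff_not_dvd hPi).2 hnd
    have := congrArg (eval₂ ψ α) hab
    rw [eval₂_add, eval₂_mul, eval₂_mul, ev, ev, h1, h2] at this
    simp at this
  have hd' : P ∣ Q := (hPp.dvd_iff_fraction_map_dvd_fraction_map k).2 hd
  exact (hP.dvd_irreducible_iff_associated hQ).1 hd'

lemma eq_of_assoc_monic {P Q : Fq[X][X]} (h : Associated P Q) (hP : P.leadingCoeff.Monic)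
    (hQ : Q.leadingCoeff.Monic) : P = Q := by
  obtain ⟨u, rfl⟩ := h
  obtain ⟨r, hr, hru⟩ := Polynomial.isUnit_iff.1 u.isUnit
  obtain ⟨s, hs, hsr⟩ := Polynomial.isUnit_iff.1 hr
  rw [← hru, ← hsr] at hQ ⊢
  rw [leadingCoeff_mul, leadingCoeff_C] at hQ
  have : (C s : Fq[X]).leadingCoeff = 1 := by
    have := hQ
    rw [Monic, leadingCoeff_mul, hP.leadingCoeff, one_mul] at this
    exact this
  rw [leadingCoeff_C] at this
  simp [this]

lemma minPoly_unique {P Q : Fq[X][X]} {α : L Fq} (hP : IsMinPolyOf Fq P α)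
    (hQ : IsMinPolyOf Fq Q α) : P = Q :=
  eq_of_assoc_monic (assoc_of_common_root hP.2.1 hQ.2.1 hP.1.ne' hQ.1.ne' hP.2.2.2.2 hQ.2.2.2.2)
    hP.2.2.2.1 hQ.2.2.2.1

lemma minPolyPrim_spec {α : L Fq} (h : IsAlgElem Fq α) : IsMinPolyOf Fq (minPolyPrim Fq α) α := by
  rw [minPolyPrim, dif_pos h]; exact h.choose_spec

lemma minPolyPrim_eq {P : Fq[X][X]} {α : L Fq} (hP : IsMinPolyOf Fq P α) :
    minPolyPrim Fq α = P := minPoly_unique (minPolyPrim_spec ⟨P, hP⟩) hP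

lemma irr_normalize {P : Fq[X][X]} (hP : Irreducible P) (h0 : P.natDegree ≠ 0) :
    ∃ u : Fq, u ≠ 0 ∧ ∀ α : L Fq, evalL Fq P α = 0 → IsMinPolyOf Fq (C (C u) * P) α := by
  have hl : P.leadingCoeff ≠ 0 := leadingCoeff_ne_zero.2 hP.ne_zero
  have hl' : P.leadingCoeff.leadingCoeff ≠ 0 := leadingCoeff_ne_zero.2 hl
  refine ⟨P.leadingCoeff.leadingCoeff⁻¹, inv_ne_zero hl', fun α hα => ?_⟩
  have hu : IsUnit (C (C P.leadingCoeff.leadingCoeff⁻¹) : Fq[X][X]) :=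
    isUnit_C.2 (isUnit_C.2 (inv_ne_zero hl').isUnit)
  have hirr : Irreducible (C (C P.leadingCoeff.leadingCoeff⁻¹) * P) :=
    (irreducible_isUnit_mul hu).2 hP
  have hdeg : (C (C P.leadingCoeff.leadingCoeff⁻¹) * P).natDegree = P.natDegree :=
    natDegree_C_mul (by simpa using hl)
  refine ⟨by lia, hirr, hirr.isPrimitive (by lia), ?_, ?_⟩
  · rw [leadingCoeff_mul, leadingCoeff_C, Monic, leadingCoeff_mul, leadingCoeff_C,
      inv_mul_cancel₀ hl']
  · rw [evalL, eval₂_mul]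
    rw [evalL] at hα
    rw [hα, mul_zero]

lemma Hpoly_unit_mul {u : Fq} (hu : u ≠ 0) (P : Fq[X][X]) :
    Hpoly Fq (C (C u) * P) = Hpoly Fq P := by
  rw [Hpoly_mul, Hpoly_C, nb_C hu, one_mul]

/-- data of the algebraic number attached to an irreducible polynomial -/
lemma alg_of_irr {P : Fq[X][X]} (hP : Irreducible P) (h0 : P.natDegree ≠ 0) {α : L Fq}
    (hα : evalL Fq P α = 0) :
    IsAlgElem Fq α ∧ degAlg Fq α = P.natDegree ∧ heightAlg Fq α = Hpoly Fq P := by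
  obtain ⟨u, hu, h⟩ := irr_normalize hP h0
  have h1 := h α hα
  refine ⟨⟨_, h1⟩, ?_, ?_⟩
  · rw [degAlg, minPolyPrim_eq h1, natDegree_C_mul (by simpa using hu)]
  · rw [heightAlg, minPolyPrim_eq h1, Hpoly_unit_mul hu]

lemma heightAlg_ge_one {α : L Fq} (h : IsAlgElem Fq α) : 1 ≤ heightAlg Fq α :=
  Hpoly_ge_one (minPolyPrim_spec h).2.1.ne_zero

lemma quad_factor {P : Fq[X][X]} (h : P.natDegree = 2) {α : L Fq} (hα : evalL Fq P α = 0) :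
    ∃ β : L Fq, φ Fq (P.coeff 1) = - φ Fq (P.coeff 2) * (α + β) ∧
      φ Fq (P.coeff 0) = φ Fq (P.coeff 2) * (α * β) ∧
      evalL Fq P β = 0 := by
  have hA : φ Fq (P.coeff 2) ≠ 0 := by
    rw [Ne, map_eq_zero_iff _ φ_inj, ← h]
    exact leadingCoeff_ne_zero.2 (by rintro rfl; simp at h)
  rw [evalL_quad h.le] at hα
  refine ⟨- φ Fq (P.coeff 1) / φ Fq (P.coeff 2) - α, ?_, ?_, ?_⟩
  · field_simp; ring
  · field_simp; linear_combination hα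
  · rw [evalL_quad h.le]; field_simp; linear_combination φ Fq (P.coeff 2) * hα

lemma exists_root {P : Fq[X][X]} (h : P.natDegree ≠ 0) : ∃ α : L Fq, evalL Fq P α = 0 := by
  have hd : (P.map (φ Fq)).degree ≠ 0 := by
    rw [degree_map_eq_of_injective φ_inj]
    intro h'
    exact h (natDegree_eq_of_degree_eq_some h')
  obtain ⟨α, hα⟩ := IsAlgClosed.exists_root _ hd
  exact ⟨α, by rwa [IsRoot, eval_map] at hα⟩

lemma v_zero {v : L Fq → ℝ} (hv : IsAbsExt Fq v) : v 0 = 0 := (hv.eq_zero_iff 0).2 rfl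
lemma v_pos {v : L Fq → ℝ} (hv : IsAbsExt Fq v) {x : L Fq} (h : x ≠ 0) : 0 < v x :=
  lt_of_le_of_ne (hv.nonneg x) (fun h' => h ((hv.eq_zero_iff x).1 h'.symm))
lemma v_one {v : L Fq → ℝ} (hv : IsAbsExt Fq v) : v 1 = 1 := by
  have := hv.extends_kabs 1
  rwa [map_one, kabs_one] at this
lemma v_neg {v : L Fq → ℝ} (hv : IsAbsExt Fq v) (x : L Fq) : v (-x) = v x := by
  have h := hv.extends_kabs (-1)
  rw [map_neg, map_one, kabs_neg, kabs_one] at h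
  rw [← neg_one_mul, hv.map_mul, h, one_mul]
lemma v_sub_le {v : L Fq → ℝ} (hv : IsAbsExt Fq v) (x y : L Fq) : v (x - y) ≤ max (v x) (v y) := by
  rw [sub_eq_add_neg, ← v_neg hv y]; exact hv.add_le _ _
lemma v_φ {v : L Fq → ℝ} (hv : IsAbsExt Fq v) (A : Fq[X]) : v (φ Fq A) = nb A := hv.extends_kabs _
lemma v_sub_comm {v : L Fq → ℝ} (hv : IsAbsExt Fq v) (x y : L Fq) : v (x - y) = v (y - x) := by rw [← v_neg hv, neg_sub]
lemma v_pow_two {v : L Fq → ℝ} (hv : IsAbsExt Fq v) (x : L Fq) : v (x ^ 2) = v x ^ 2 := by rw [pow_two, pow_two, hv.map_mul]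

end PartB

section PartC
variable {Fq}

/-- uniform lower bound for polynomial values -/
def Lo (n : ℕ) (ξ : K Fq) (s : ℝ) : Prop :=
  ∃ c : ℝ, 0 < c ∧ ∀ P : Fq[X][X], P.natDegree ≤ n → evalK Fq P ξ ≠ 0 →
    c * Hpoly Fq P ^ (-s) ≤ kabs Fq (evalK Fq P ξ)

/-- uniform lower bound for distances to algebraic numbers -/
def LoS (v : L Fq → ℝ) (ξ : K Fq) (s : ℝ) : Prop :=
  ∃ c : ℝ, 0 < c ∧ ∀ α : L Fq, IsAlgElem Fq α → degAlg Fq α ≤ 2 → α ≠ toL Fq ξ →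
    c * heightAlg Fq α ^ (-s - 1) ≤ v (toL Fq ξ - α)

lemma height_bound {c H s w x : ℝ} (hc : 0 < c) (hH : 1 ≤ H) (hsw : s < w)
    (h1 : c * H ^ (-s) ≤ x) (h2 : x ≤ H ^ (-w)) : H ≤ (c⁻¹) ^ ((w - s)⁻¹) := by
  have hH0 : 0 < H := by linarith
  have h3 : H ^ (w - s) ≤ c⁻¹ := by
    have h4 : c * H ^ (-s) ≤ H ^ (-w) := h1.trans h2
    have h5 : H ^ (w - s) = H ^ w * H ^ (-s) := by
      rw [← Real.rpow_add hH0]; ring_nf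
    have h6 : H ^ w * H ^ (-w) = 1 := by
      rw [← Real.rpow_add hH0]; simp
    rw [h5, ← one_div, le_div_iff₀ hc]
    have hw : 0 < H ^ w := Real.rpow_pos_of_pos hH0 _
    nlinarith
  have h7 : H = (H ^ (w - s)) ^ ((w - s)⁻¹) := by
    rw [← Real.rpow_mul hH0.le, mul_inv_cancel₀ (by linarith), Real.rpow_one]
  rw [h7]
  exact Real.rpow_le_rpow (by positivity) h3 (inv_nonneg.2 (by linarith))

lemma wExp_le_of_Lo {ξ : K Fq} {s : ℝ} (h : Lo 2 ξ s) : wExp Fq 2 ξ ≤ (s : EReal) := by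
  obtain ⟨c, hc, h⟩ := h
  refine sSup_le ?_
  rintro _ ⟨w, rfl, hinf⟩
  rw [EReal.coe_le_coe_iff]
  by_contra hlt
  rw [not_le] at hlt
  refine hinf ((finite_Hpoly_le (Fq := Fq) ((c⁻¹) ^ ((w - s)⁻¹))).subset ?_)
  rintro P ⟨hd, hpos, hle⟩
  have hne := kabs_pos_iff.1 hpos
  refine ⟨hd, height_bound hc (Hpoly_ge_one ?_) hlt (h P hd hne) hle⟩
  rintro rfl
  simp [evalK] at hne

lemma finite_min {ι : Type*} {S : Set ι} (hS : S.Finite) (f : ι → ℝ) (hf : ∀ i ∈ S, 0 < f i) :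
    ∃ c : ℝ, 0 < c ∧ c ≤ 1 ∧ ∀ i ∈ S, c ≤ f i := by
  induction S, hS using Set.Finite.induction_on with
  | empty => exact ⟨1, one_pos, le_rfl, by simp⟩
  | @insert a S _ _ ih =>
    obtain ⟨c, hc, hc1, h⟩ := ih fun i hi => hf i (Set.mem_insert_of_mem _ hi)
    refine ⟨min c (f a), lt_min hc (hf a (Set.mem_insert _ _)), (min_le_left _ _).trans hc1, ?_⟩
    rintro i (rfl | hi)
    · exact min_le_right _ _
    · exact (min_le_left _ _).trans (h i hi)

lemma Lo_of_wExp_lt {ξ : K Fq} {s : ℝ} (h : wExp Fq 2 ξ < (s : EReal)) : Lo 2 ξ s := by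
  have hfin : {P : Polynomial (Polynomial Fq) | P.natDegree ≤ 2 ∧ 0 < kabs Fq (evalK Fq P ξ) ∧
      kabs Fq (evalK Fq P ξ) ≤ Hpoly Fq P ^ (-s)}.Finite := by
    by_contra hinf
    refine absurd ?_ (not_le.2 h)
    exact le_sSup ⟨s, rfl, hinf⟩
  obtain ⟨c, hc, hc1, hm⟩ := finite_min hfin
    (fun P => kabs Fq (evalK Fq P ξ) / Hpoly Fq P ^ (-s)) (by
      rintro P ⟨_, h1, _⟩
      have : P ≠ 0 := by
        rintro rfl
        have := kabs_pos_iff.1 h1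
        simp [evalK] at this
      have := Hpoly_ge_one this
      positivity)
  refine ⟨c, hc, fun P hd hne => ?_⟩
  have hP : P ≠ 0 := by
    rintro rfl
    simp [evalK] at hne
  have hH := Hpoly_ge_one hP
  have hp : 0 < Hpoly Fq P ^ (-s) := by positivity
  by_cases hb : kabs Fq (evalK Fq P ξ) ≤ Hpoly Fq P ^ (-s)
  · have := hm P ⟨hd, kabs_pos hne, hb⟩
    rwa [le_div_iff₀ hp] at this
  · rw [not_le] at hb
    nlinarith

lemma finite_height_le (B : ℝ) :
    {α : L Fq | IsAlgElem Fq α ∧ degAlg Fq α ≤ 2 ∧ heightAlg Fq α ≤ B}.Finite := by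
  have h1 : (⋃ P ∈ {P : Fq[X][X] | P.natDegree ≤ 2 ∧ Hpoly Fq P ≤ B},
      {α : L Fq | P ≠ 0 ∧ evalL Fq P α = 0}).Finite := by
    refine (finite_Hpoly_le B).biUnion fun P _ => ?_
    by_cases hP : P = 0
    · simp [hP]
    have hm : P.map (φ Fq) ≠ 0 := by rwa [Ne, Polynomial.map_eq_zero_iff φ_inj]
    refine (Polynomial.finite_setOfPred_isRoot hm).subset ?_
    rintro α ⟨_, h⟩
    show IsRoot _ _
    rwa [IsRoot, eval_map]
  refine h1.subset ?_
  rintro α ⟨h, hd, hh⟩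
  have hs := minPolyPrim_spec h
  simp only [Set.mem_iUnion]
  exact ⟨minPolyPrim Fq α, ⟨hd, hh⟩, hs.2.1.ne_zero, hs.2.2.2.2⟩

lemma wStar_le_of_LoS {v : L Fq → ℝ} (hv : IsAbsExt Fq v) {ξ : K Fq} {s : ℝ}
    {S : Set (L Fq)} (hS : S.Finite) {c : ℝ} (hc : 0 < c)
    (h : ∀ α : L Fq, IsAlgElem Fq α → degAlg Fq α ≤ 2 → α ≠ toL Fq ξ → α ∉ S →
    c * heightAlg Fq α ^ (-s - 1) ≤ v (toL Fq ξ - α)) : wStarExp Fq v 2 ξ ≤ (s : EReal) := by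
  refine sSup_le ?_
  rintro _ ⟨w, rfl, hinf⟩
  rw [EReal.coe_le_coe_iff]
  by_contra hlt
  rw [not_le] at hlt
  refine hinf ((hS.union (finite_height_le (Fq := Fq) ((c⁻¹) ^ (((w + 1) - (s + 1))⁻¹)))).subset ?_)
  rintro α ⟨ha, hd, hpos, hle⟩
  by_cases hαS : α ∈ S
  · exact Or.inl hαS
  refine Or.inr ⟨ha, hd, ?_⟩
  have hne : α ≠ toL Fq ξ := by
    rintro rfl
    rw [sub_self, v_zero hv] at hpos
    exact lt_irrefl _ hpos
  have h1 := h α ha hd hne hαS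
  refine height_bound hc (heightAlg_ge_one ha) (by linarith) (x := v (toL Fq ξ - α)) ?_ ?_
  · rwa [neg_add']
  · rwa [neg_add']

lemma LoS_of_wStar_lt {v : L Fq → ℝ} (hv : IsAbsExt Fq v) {ξ : K Fq} {s : ℝ}
    (h : wStarExp Fq v 2 ξ < (s : EReal)) : LoS v ξ s := by
  have hfin : {α : L Fq | IsAlgElem Fq α ∧ degAlg Fq α ≤ 2 ∧ 0 < v (toL Fq ξ - α) ∧
      v (toL Fq ξ - α) ≤ heightAlg Fq α ^ (-s - 1)}.Finite := by
    by_contra hinf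
    refine absurd ?_ (not_le.2 h)
    exact le_sSup ⟨s, rfl, hinf⟩
  obtain ⟨c, hc, hc1, hm⟩ := finite_min hfin
    (fun α => v (toL Fq ξ - α) / heightAlg Fq α ^ (-s - 1)) (by
      rintro α ⟨h0, _, h1, _⟩
      have := heightAlg_ge_one h0
      positivity)
  refine ⟨c, hc, fun α ha hd hne => ?_⟩
  have hH := heightAlg_ge_one ha
  have hp : 0 < heightAlg Fq α ^ (-s - 1) := by positivity
  by_cases hb : v (toL Fq ξ - α) ≤ heightAlg Fq α ^ (-s - 1)
  · have := hm α ⟨ha, hd, v_pos hv (sub_ne_zero.2 hne.symm), hb⟩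
    rwa [le_div_iff₀ hp] at this
  · rw [not_le] at hb
    nlinarith

/-- extension from irreducible polynomials to all polynomials -/
lemma Lo_of_irr {n : ℕ} {ξ : K Fq} {s : ℝ} (hs : 0 ≤ s)
    (h : ∃ c : ℝ, 0 < c ∧ ∀ P : Fq[X][X], P.natDegree ≤ n → P.natDegree ≠ 0 → Irreducible P →
      evalK Fq P ξ ≠ 0 → c * Hpoly Fq P ^ (-s) ≤ kabs Fq (evalK Fq P ξ)) : Lo n ξ s := by
  obtain ⟨c0, hc0, h0⟩ := h
  obtain ⟨c, hc, hc1, hcc⟩ : ∃ c : ℝ, 0 < c ∧ c ≤ 1 ∧ c ≤ c0 :=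
    ⟨min c0 1, lt_min hc0 one_pos, min_le_right _ _, min_le_left _ _⟩
  have key0 : ∀ A : Fq[X], A ≠ 0 → Hpoly Fq (C A) ^ (-s) ≤ kabs Fq (evalK Fq (C A) ξ) := by
    intro A hA
    have h1 : evalK Fq (C A) ξ = polyToK Fq A := by simp [evalK]
    rw [h1, Hpoly_C]
    have h2 := nb_ge_one hA
    exact (Real.rpow_le_one_of_one_le_of_nonpos h2 (by linarith)).trans h2
  have key : ∀ P : Fq[X][X], P.natDegree ≤ n → evalK Fq P ξ ≠ 0 →
      c ^ P.natDegree * Hpoly Fq P ^ (-s) ≤ kabs Fq (evalK Fq P ξ) := by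
    intro P
    induction P using WfDvdMonoid.induction_on_irreducible with
    | zero => intro _ h; simp [evalK] at h
    | unit u hu =>
      intro _ hne
      obtain ⟨r, hr, rfl⟩ := Polynomial.isUnit_iff.1 hu
      simpa using key0 r hr.ne_zero
    | mul a i ha hi ih =>
      intro hd hne
      rw [evalK_mul] at hne ⊢
      have hnei := left_ne_zero_of_mul hne
      have hnea := right_ne_zero_of_mul hne
      have hdeg := natDegree_mul hi.ne_zero ha
      rw [hdeg] at hd ⊢
      rw [Hpoly_mul, kabs_mul, Real.mul_rpow (Hpoly_nonneg _) (Hpoly_nonneg _), pow_add]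
      have h1 := ih (by lia) hnea
      have hHi : 0 < Hpoly Fq i ^ (-s) :=
        Real.rpow_pos_of_pos (by linarith [Hpoly_ge_one hi.ne_zero]) _
      have hHa : 0 < Hpoly Fq a ^ (-s) :=
        Real.rpow_pos_of_pos (by linarith [Hpoly_ge_one ha]) _
      have h2 : c ^ i.natDegree * Hpoly Fq i ^ (-s) ≤ kabs Fq (evalK Fq i ξ) := by
        by_cases hi0 : i.natDegree = 0
        · have := key0 (i.coeff 0) (by
            intro h; apply hi.ne_zero; rw [eq_C_of_natDegree_eq_zero hi0, h, C_0])
          rw [← eq_C_of_natDegree_eq_zero hi0] at this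
          simpa [hi0] using this
        · refine le_trans ?_ (h0 i (by lia) hi0 hi hnei)
          refine mul_le_mul_of_nonneg_right (le_trans ?_ hcc) hHi.le
          exact pow_le_of_le_one hc.le hc1 hi0
      calc _ = (c ^ i.natDegree * Hpoly Fq i ^ (-s)) * (c ^ a.natDegree * Hpoly Fq a ^ (-s)) := by
            ring
        _ ≤ _ := mul_le_mul h2 h1 (by positivity) (kabs_nonneg _)
  refine ⟨c ^ n, by positivity, fun P hd hne => le_trans ?_ (key P hd hne)⟩
  refine mul_le_mul_of_nonneg_right (pow_le_pow_of_le_one hc.le hc1 hd) ?_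
  exact Real.rpow_nonneg (Hpoly_nonneg _) _

end PartC

section PartD
variable {Fq}

lemma no_exp_bound {c B r : ℝ} (hc : 0 < c) (hr : 1 < r) (N : ℕ)
    (h : ∀ n ≥ N, c * r ^ n ≤ B) : False := by
  obtain ⟨n, hn⟩ := pow_unbounded_of_one_lt (B / c) hr
  have h1 := h (max n N) (le_max_right _ _)
  have h2 : r ^ n ≤ r ^ (max n N) := pow_le_pow_right₀ hr.le (le_max_left _ _)
  rw [div_lt_iff₀ hc] at hn
  nlinarith

lemma Lo_ge {ξ : K Fq} {s : ℝ} (h : Lo 2 ξ s) : -1 ≤ s := by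
  obtain ⟨c, hc, h⟩ := h
  by_contra hlt
  rw [not_le] at hlt
  have hq := one_lt_card (Fq := Fq)
  refine no_exp_bound hc (r := (Fintype.card Fq : ℝ) ^ (-s - 1)) (B := 1)
    (Real.one_lt_rpow hq (by linarith)) 0 fun n _ => ?_
  have hne : (X ^ n : Fq[X]) ≠ 0 := pow_ne_zero _ X_ne_zero
  have he : evalK Fq (C (X ^ n)) ξ = polyToK Fq (X ^ n) := by rw [evalK, eval₂_C]
  have h1 := h (C (X ^ n)) (by simp) (by
    rw [he]; exact fun h => hne (polyToK_inj (by rw [h, map_zero])))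
  rw [he, Hpoly_C] at h1
  have h2 : kabs Fq (polyToK Fq (X ^ n)) = (Fintype.card Fq : ℝ) ^ n := by
    have := nb_pow (X : Fq[X]) n
    rwa [nb_X] at this
  rw [h2, show nb (X ^ n : Fq[X]) = _ from h2] at h1
  have hp : (0 : ℝ) < (Fintype.card Fq : ℝ) ^ n := by positivity
  have h3 : ((Fintype.card Fq : ℝ) ^ (-s - 1)) ^ n * (Fintype.card Fq : ℝ) ^ n
      = ((Fintype.card Fq : ℝ) ^ n) ^ (-s) := by
    rw [← mul_pow, ← Real.rpow_add_one (by positivity), ← Real.rpow_natCast, ← Real.rpow_natCast,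
      ← Real.rpow_mul (by positivity), ← Real.rpow_mul (by positivity)]
    congr 1; ring
  rw [← h3] at h1
  by_contra hcon
  rw [not_le] at hcon
  nlinarith

lemma tinv_data (n : ℕ) : IsAlgElem Fq (toL Fq ((TT Fq)⁻¹ ^ n)) ∧
    degAlg Fq (toL Fq ((TT Fq)⁻¹ ^ n)) = 1 ∧
    heightAlg Fq (toL Fq ((TT Fq)⁻¹ ^ n)) = (Fintype.card Fq : ℝ) ^ n := by
  have hq := one_lt_card (Fq := Fq)
  have hT0 : TT Fq ≠ 0 := by
    intro h
    have := kabs_T (Fq := Fq)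
    rw [h, kabs_zero] at this
    linarith
  set P : Fq[X][X] := C (X ^ n) * X - C 1 with hP
  have hXn : (X ^ n : Fq[X]) ≠ 0 := pow_ne_zero _ X_ne_zero
  have c0 : P.coeff 0 = -1 := by simp [hP]
  have c1 : P.coeff 1 = X ^ n := by
    rw [hP, coeff_sub, coeff_C_mul, coeff_X_one, coeff_C, if_neg one_ne_zero, mul_one, sub_zero]
  have hdeg : P.degree = 1 := by
    rw [hP, sub_eq_add_neg, ← C_neg]
    exact degree_linear hXn
  have hnd : P.natDegree = 1 := natDegree_eq_of_degree_eq_some hdeg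
  have hirr : Irreducible P := by
    apply irreducible_of_degree_eq_one_of_isRelPrime_coeff hdeg
    rw [c0]
    exact (isRelPrime_one_left).neg_left
  have hroot : evalL Fq P (toL Fq ((TT Fq)⁻¹ ^ n)) = 0 := by
    rw [evalL_toL, hP, evalK, eval₂_sub, eval₂_mul, eval₂_C, eval₂_X, eval₂_C, map_pow, polyToK_X,
      inv_pow, mul_inv_cancel₀ (pow_ne_zero n hT0), map_one, sub_self, map_zero]
  obtain ⟨ha, hd, hh⟩ := alg_of_irr hirr (by lia) hroot
  have hH : Hpoly Fq P = (Fintype.card Fq : ℝ) ^ n := by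
    apply le_antisymm
    · apply Hpoly_le
      intro i
      rcases i with _ | _ | i
      · rw [c0, nb_neg, nb_one]; exact one_le_pow₀ hq.le
      · rw [c1, nb_pow, nb_X]
      · rw [coeff_eq_zero_of_natDegree_lt (by lia), nb_zero]; positivity
    · have := nb_coeff_le P 1
      rwa [c1, nb_pow, nb_X] at this
  exact ⟨ha, by lia, by rw [hh, hH]⟩

lemma kabs_tinv (n : ℕ) : kabs Fq ((TT Fq)⁻¹ ^ n) = ((Fintype.card Fq : ℝ) ^ n)⁻¹ := by
  rw [kabs_pow, kabs_inv, kabs_T, inv_pow]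

lemma LoS_ge {v : L Fq → ℝ} (hv : IsAbsExt Fq v) {ξ : K Fq} {s : ℝ} (h : LoS v ξ s) : -1 ≤ s := by
  obtain ⟨c, hc, h⟩ := h
  by_contra hlt
  rw [not_le] at hlt
  have hq := one_lt_card (Fq := Fq)
  have hTn := kabs_tinv (Fq := Fq)
  obtain ⟨N, hN⟩ : ∃ N : ℕ, ∀ n ≥ N, (TT Fq)⁻¹ ^ n ≠ ξ := by
    by_contra hcon
    push Not at hcon
    obtain ⟨n, _, hn⟩ := hcon 0
    obtain ⟨m, hm, hm'⟩ := hcon (n + 1)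
    have := hTn n
    rw [hn, ← hm', hTn m] at this
    have h1 := pow_lt_pow_right₀ hq (show n < m by lia)
    have h2 := inv_injective this
    linarith
  refine no_exp_bound hc (r := (Fintype.card Fq : ℝ) ^ (-s - 1)) (B := max (kabs Fq ξ) 1)
    (Real.one_lt_rpow hq (by linarith)) N fun n hn => ?_
  obtain ⟨ha, hd, hh⟩ := tinv_data (Fq := Fq) n
  have h1 := h _ ha (by lia) (fun h => hN n hn ((algebraMap (K Fq) (L Fq)).injective h))
  rw [hh, ← map_sub, hv.extends_kabs] at h1
  have h2 : ((Fintype.card Fq : ℝ) ^ n) ^ (-s - 1) = ((Fintype.card Fq : ℝ) ^ (-s - 1)) ^ n := by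
    rw [← Real.rpow_natCast, ← Real.rpow_natCast,
      ← Real.rpow_mul (by positivity), ← Real.rpow_mul (by positivity), mul_comm]
  rw [h2] at h1
  refine h1.trans ((kabs_sub_le _ _).trans (max_le_max le_rfl ?_))
  rw [hTn]
  exact inv_le_one_of_one_le₀ (one_le_pow₀ hq.le)

lemma v_eval_le {v : L Fq → ℝ} (hv : IsAbsExt Fq v) {ξ : K Fq} {α : L Fq} {P : Fq[X][X]}
    (hd : P.natDegree ≤ 2) (hα : evalL Fq P α = 0) (h1 : v (toL Fq ξ - α) ≤ 1) :
    kabs Fq (evalK Fq P ξ) ≤ v (toL Fq ξ - α) * (Hpoly Fq P * max (kabs Fq ξ) 1) := by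
  have e : toL Fq (evalK Fq P ξ) = (toL Fq ξ - α) *
      (φ Fq (P.coeff 2) * (toL Fq ξ + α) + φ Fq (P.coeff 1)) := by
    rw [← evalL_toL, evalL_quad hd]
    rw [evalL_quad hd] at hα
    linear_combination hα
  rw [← hv.extends_kabs, e, hv.map_mul]
  refine mul_le_mul_of_nonneg_left ?_ (hv.nonneg _)
  have hM1 : (1 : ℝ) ≤ max (kabs Fq ξ) 1 := le_max_right _ _
  have hvα : v α ≤ max (kabs Fq ξ) 1 := by
    have := v_sub_le hv (toL Fq ξ) (toL Fq ξ - α)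
    rw [sub_sub_cancel, hv.extends_kabs] at this
    exact this.trans (max_le_max le_rfl h1)
  have hs : v (toL Fq ξ + α) ≤ max (kabs Fq ξ) 1 := by
    refine (hv.add_le _ _).trans (max_le ?_ hvα)
    rw [hv.extends_kabs]; exact le_max_left _ _
  have hH := Hpoly_nonneg P
  refine (hv.add_le _ _).trans (max_le ?_ ?_)
  · rw [hv.map_mul, v_φ hv]
    exact mul_le_mul (nb_coeff_le _ _) hs (hv.nonneg _) hH
  · rw [v_φ hv]
    have := nb_coeff_le P 1
    nlinarith

lemma wStar_le_of_Lo {v : L Fq → ℝ} (hv : IsAbsExt Fq v) {ξ : K Fq} {s : ℝ} (h : Lo 2 ξ s) :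
    wStarExp Fq v 2 ξ ≤ (s : EReal) := by
  have hs := Lo_ge h
  obtain ⟨c, hc, h⟩ := h
  set M := max (kabs Fq ξ) 1 with hM
  have hM1 : (1 : ℝ) ≤ M := le_max_right _ _
  have hfin : {α : L Fq | IsAlgElem Fq α ∧ degAlg Fq α ≤ 2 ∧
      evalK Fq (minPolyPrim Fq α) ξ = 0}.Finite := by
    refine (finite_height_le (Fq := Fq) (heightAlg Fq (toL Fq ξ))).subset ?_
    rintro α ⟨ha, hd, h0⟩
    refine ⟨ha, hd, ?_⟩
    obtain ⟨h1, h2, h3, h4, h5⟩ := minPolyPrim_spec ha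
    have : IsMinPolyOf Fq (minPolyPrim Fq α) (toL Fq ξ) :=
      ⟨h1, h2, h3, h4, by rw [evalL_toL, h0, map_zero]⟩
    rw [heightAlg, heightAlg, minPolyPrim_eq this]
  refine wStar_le_of_LoS hv hfin (c := min (c / M) 1) (lt_min (by positivity) one_pos) ?_
  intro α ha hd hne hS
  have h0 : evalK Fq (minPolyPrim Fq α) ξ ≠ 0 := fun h0 => hS ⟨ha, hd, h0⟩
  have hH := heightAlg_ge_one ha
  have hp : 0 < heightAlg Fq α ^ (-s - 1) := Real.rpow_pos_of_pos (by linarith) _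
  by_cases h1 : v (toL Fq ξ - α) ≤ 1
  · have h2 := v_eval_le hv hd (minPolyPrim_spec ha).2.2.2.2 h1
    have h3 := h _ hd h0
    have h4 : c * heightAlg Fq α ^ (-s) ≤ v (toL Fq ξ - α) * (heightAlg Fq α * M) := h3.trans h2
    have h5 : heightAlg Fq α ^ (-s - 1) * heightAlg Fq α = heightAlg Fq α ^ (-s) := by
      rw [← Real.rpow_add_one (by positivity)]; congr 1; ring
    have h6 : c / M * heightAlg Fq α ^ (-s - 1) ≤ v (toL Fq ξ - α) := by
      rw [div_mul_eq_mul_div, div_le_iff₀ (by positivity)]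
      rw [← h5] at h4
      have h7 : (c * heightAlg Fq α ^ (-s - 1)) * heightAlg Fq α ≤
        (v (toL Fq ξ - α) * M) * heightAlg Fq α := by linarith
      exact le_of_mul_le_mul_right h7 (by linarith)
    exact (mul_le_mul_of_nonneg_right (min_le_left _ _) hp.le).trans h6
  · have h2 : heightAlg Fq α ^ (-s - 1) ≤ 1 :=
      Real.rpow_le_one_of_one_le_of_nonpos hH (by linarith)
    have h3 : min (c / M) 1 ≤ 1 := min_le_right _ _
    have h4 : 0 < min (c / M) 1 := lt_min (by positivity) one_pos
    nlinarith

lemma kabs_sq_add (x y : K Fq) : kabs Fq x ^ 2 ≤ kabs Fq (x ^ 2 + TT Fq * y ^ 2) ∧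
    kabs Fq y ^ 2 ≤ kabs Fq (x ^ 2 + TT Fq * y ^ 2) := by
  have hq := one_lt_card (Fq := Fq)
  have hTy : kabs Fq (TT Fq * y ^ 2) = Fintype.card Fq * kabs Fq y ^ 2 := by
    rw [kabs_mul, kabs_T, kabs_pow]
  have hyT : kabs Fq y ^ 2 ≤ kabs Fq (TT Fq * y ^ 2) := by
    rw [hTy]
    nlinarith [sq_nonneg (kabs Fq y)]
  by_cases hx : x = 0
  · subst hx
    simp only [kabs_zero, ne_eq, OfNat.ofNat_ne_zero, not_false_eq_true, zero_pow, zero_add]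
    exact ⟨kabs_nonneg _, hyT⟩
  by_cases hy : y = 0
  · subst hy
    simp only [kabs_zero, ne_eq, OfNat.ofNat_ne_zero, not_false_eq_true, zero_pow, mul_zero,
      add_zero, kabs_pow, le_refl, true_and]
    exact sq_nonneg _
  have hne : kabs Fq (x ^ 2) ≠ kabs Fq (TT Fq * y ^ 2) := by
    rw [hTy, kabs_pow, kabs_of_ne hx, kabs_of_ne hy, ← zpow_natCast, ← zpow_natCast, ← zpow_mul,
      ← zpow_mul, ← zpow_one_add₀ (by positivity)]
    intro h
    have := zpow_right_injective₀ (by positivity) hq.ne' h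
    push_cast at this
    lia
  rcases lt_or_gt_of_ne hne with h | h
  · rw [add_comm, kabs_add_eq h]
    rw [kabs_pow] at h
    exact ⟨h.le, hyT⟩
  · rw [kabs_add_eq h]
    exact ⟨(kabs_pow _ _).ge, hyT.trans h.le⟩

lemma char_two_decomp (h2 : (2 : Fq) = 0) (A : Fq[X]) : ∃ E F : Fq[X], A = E ^ 2 + X * F ^ 2 := by
  have h2' : (2 : Fq[X]) = 0 := by
    have := congrArg (C : Fq →+* Fq[X]) h2
    rwa [map_ofNat, map_zero] at this
  have hchar : ringChar Fq = 2 := by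
    have : ringChar Fq ∣ 2 := ringChar.dvd (by exact_mod_cast h2)
    rcases (Nat.dvd_prime Nat.prime_two).1 this with h | h
    · exact absurd h (CharP.ringChar_ne_one)
    · exact h
  induction A using Polynomial.induction_on' with
  | add A B hA hB =>
    obtain ⟨E, F, rfl⟩ := hA
    obtain ⟨E', F', rfl⟩ := hB
    exact ⟨E + E', F + F', by linear_combination (-(E * E') - X * F * F') * h2'⟩
  | monomial n a =>
    obtain ⟨b, rfl⟩ := FiniteField.isSquare_of_char_two hchar a
    rcases Nat.even_or_odd' n with ⟨m, rfl | rfl⟩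
    · refine ⟨C b * X ^ m, 0, ?_⟩
      rw [← C_mul_X_pow_eq_monomial, C_mul]; ring
    · refine ⟨0, C b * X ^ m, ?_⟩
      rw [← C_mul_X_pow_eq_monomial, C_mul]; ring

lemma nb_sq_le_decomp {A E F : Fq[X]} (h : A = E ^ 2 + X * F ^ 2) :
    nb E ^ 2 ≤ nb A ∧ nb F ^ 2 ≤ nb A := by
  have := kabs_sq_add (polyToK Fq E) (polyToK Fq F)
  rw [← polyToK_X, ← map_pow, ← map_pow, ← map_mul, ← map_add, ← h] at this
  exact this

lemma linear_data (b a : Fq[X]) (ξ : K Fq) : (C b * X + C a : Fq[X][X]).natDegree ≤ 1 ∧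
    evalK Fq (C b * X + C a) ξ = polyToK Fq b * ξ + polyToK Fq a ∧
    Hpoly Fq (C b * X + C a) ≤ max (nb b) (nb a) := by
  refine ⟨natDegree_linear_le, by simp [evalK], ?_⟩
  apply Hpoly_le
  intro i
  rcases i with _ | _ | i
  · simp
  · simp [coeff_C]
  · rw [coeff_eq_zero_of_natDegree_lt (lt_of_le_of_lt natDegree_linear_le (by lia)), nb_zero]
    exact le_max_of_le_left (nb_nonneg _)

lemma Lo1_of_LoS {v : L Fq → ℝ} (hv : IsAbsExt Fq v) {ξ : K Fq} {s : ℝ} (h : LoS v ξ s) :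
    Lo 1 ξ (s + 1) := by
  have hs := LoS_ge hv h
  obtain ⟨c, hc, h⟩ := h
  refine Lo_of_irr (by linarith) ⟨c, hc, fun P hd h0 hirr hne => ?_⟩
  obtain ⟨α, hα⟩ := exists_root h0
  obtain ⟨ha, hda, hh⟩ := alg_of_irr hirr h0 hα
  have hαξ : α ≠ toL Fq ξ := by
    rintro rfl
    rw [evalL_toL] at hα
    exact hne ((map_eq_zero (algebraMap (K Fq) (L Fq))).1 hα)
  have h1 := h α ha (by lia) hαξ
  rw [hh, show -s - 1 = -(s + 1) by ring] at h1
  refine h1.trans ?_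
  have c2 : P.coeff 2 = 0 := coeff_eq_zero_of_natDegree_lt (by lia)
  have c1 : P.coeff 1 ≠ 0 := by
    have : P.coeff P.natDegree ≠ 0 := leadingCoeff_ne_zero.2 hirr.ne_zero
    rwa [show P.natDegree = 1 by lia] at this
  have e : toL Fq (evalK Fq P ξ) = φ Fq (P.coeff 1) * (toL Fq ξ - α) := by
    rw [← evalL_toL, evalL_quad (by lia), c2]
    rw [evalL_quad (by lia), c2] at hα
    simp only [map_zero, zero_mul, zero_add] at hα ⊢
    linear_combination hα
  rw [← hv.extends_kabs, e, hv.map_mul, v_φ hv]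
  have := nb_ge_one c1
  nlinarith [hv.nonneg (toL Fq ξ - α)]

lemma Lo_sep {v : L Fq → ℝ} (hv : IsAbsExt Fq v) {ξ : K Fq} {P : Fq[X][X]} (hd : P.natDegree = 2)
    (hdisc : P.coeff 1 ^ 2 - 4 * P.coeff 2 * P.coeff 0 ≠ 0) :
    ∃ α, evalL Fq P α = 0 ∧ v (toL Fq ξ - α) ≤ kabs Fq (evalK Fq P ξ) := by
  obtain ⟨α, hα⟩ := exists_root (P := P) (by lia)
  obtain ⟨β, h1, h0, hβ⟩ := quad_factor hd hα
  have e : toL Fq (evalK Fq P ξ) = φ Fq (P.coeff 2) * (toL Fq ξ - α) * (toL Fq ξ - β) := by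
    rw [← evalL_toL, evalL_quad hd.le, h1, h0]; ring
  have hD : φ Fq (P.coeff 1 ^ 2 - 4 * P.coeff 2 * P.coeff 0) =
      (φ Fq (P.coeff 2) * (α - β)) ^ 2 := by
    simp only [map_sub, map_mul, map_pow, h1, h0, map_ofNat]; ring
  have hD1 : 1 ≤ nb (P.coeff 2) * v (α - β) := by
    have h2 := nb_ge_one hdisc
    rw [← v_φ hv, hD, v_pow_two hv, hv.map_mul, v_φ hv] at h2
    have h3 : 0 ≤ nb (P.coeff 2) * v (α - β) := mul_nonneg (nb_nonneg _) (hv.nonneg _)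
    nlinarith
  have hab : v (α - β) ≤ max (v (toL Fq ξ - β)) (v (toL Fq ξ - α)) := by
    have := v_sub_le hv (toL Fq ξ - β) (toL Fq ξ - α)
    rwa [sub_sub_sub_cancel_left] at this
  have hE : kabs Fq (evalK Fq P ξ) =
      nb (P.coeff 2) * v (toL Fq ξ - α) * v (toL Fq ξ - β) := by
    rw [← hv.extends_kabs, e, hv.map_mul, hv.map_mul, v_φ hv]
  rw [hE]
  have hn := nb_nonneg (P.coeff 2)
  have ha := hv.nonneg (toL Fq ξ - α)
  have hb := hv.nonneg (toL Fq ξ - β)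
  rcases le_total (v (toL Fq ξ - α)) (v (toL Fq ξ - β)) with hle | hle
  · refine ⟨α, hα, ?_⟩
    rw [max_eq_left hle] at hab
    have : 1 ≤ nb (P.coeff 2) * v (toL Fq ξ - β) :=
      hD1.trans (mul_le_mul_of_nonneg_left hab hn)
    nlinarith
  · refine ⟨β, hβ, ?_⟩
    rw [max_eq_right hle] at hab
    have : 1 ≤ nb (P.coeff 2) * v (toL Fq ξ - α) :=
      hD1.trans (mul_le_mul_of_nonneg_left hab hn)
    nlinarith

lemma disc_zero_char {P : Fq[X][X]} (hirr : Irreducible P) (hd : P.natDegree = 2)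
    (hdisc : P.coeff 1 ^ 2 - 4 * P.coeff 2 * P.coeff 0 = 0) : (2 : Fq) = 0 := by
  by_contra h2
  have hA : P.coeff 2 ≠ 0 := by
    have : P.coeff P.natDegree ≠ 0 := leadingCoeff_ne_zero.2 hirr.ne_zero
    rwa [hd] at this
  have h2' : (2 : Fq[X]) ≠ 0 := by
    intro h
    apply h2
    have := congrArg (eval 0) h
    simpa using this
  have e : P * C (4 * P.coeff 2) = (C (2 * P.coeff 2) * X + C (P.coeff 1)) ^ 2 := by
    have hdC := congrArg (C : Fq[X] → Fq[X][X]) hdisc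
    simp only [C_sub, C_mul, C_pow, C_0] at hdC
    have hq := eq_quad hd.le
    simp only [C_mul]
    have h4 : (C (4 : Fq[X]) : Fq[X][X]) = 4 := map_ofNat C 4
    have h2'' : (C (2 : Fq[X]) : Fq[X][X]) = 2 := map_ofNat C 2
    rw [h4] at hdC ⊢
    rw [h2'']
    linear_combination 4 * C (P.coeff 2) * hq - hdC
  have hdvd : P ∣ C (2 * P.coeff 2) * X + C (P.coeff 1) :=
    hirr.prime.dvd_of_dvd_pow (Dvd.intro _ e)
  have hne : C (2 * P.coeff 2) * X + C (P.coeff 1) ≠ 0 := by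
    intro h
    have := congrArg (fun Q => coeff Q 1) h
    simp [coeff_C, hA, h2'] at this
  have h1 := natDegree_le_of_dvd hdvd hne
  have h3 := natDegree_linear_le (a := 2 * P.coeff 2) (b := P.coeff 1)
  lia

lemma Lo_insep {ξ : K Fq} {s c : ℝ} (hs : 0 ≤ s) (hc : 0 < c)
    (h : ∀ P : Fq[X][X], P.natDegree ≤ 1 → evalK Fq P ξ ≠ 0 →
      c * Hpoly Fq P ^ (-s) ≤ kabs Fq (evalK Fq P ξ))
    (h2 : (2 : Fq) = 0) {P : Fq[X][X]} (hP : P.natDegree ≤ 2) (h1 : P.coeff 1 = 0)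
    (hne : evalK Fq P ξ ≠ 0) :
    c ^ 2 * Hpoly Fq P ^ (-s) ≤ kabs Fq (evalK Fq P ξ) := by
  obtain ⟨E, F, hA⟩ := char_two_decomp h2 (P.coeff 2)
  obtain ⟨E', F', hC⟩ := char_two_decomp h2 (P.coeff 0)
  have h2K : (2 : K Fq) = 0 := by
    have := congrArg (HahnSeries.C : Fq →+* K Fq) h2
    rwa [map_ofNat, map_zero] at this
  have e : evalK Fq P ξ = (polyToK Fq E * ξ + polyToK Fq E') ^ 2 +
      TT Fq * (polyToK Fq F * ξ + polyToK Fq F') ^ 2 := by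
    rw [evalK_quad hP, h1, hA, hC]
    simp only [map_add, map_mul, map_pow, polyToK_X, map_zero]
    linear_combination (-(polyToK Fq E * ξ * polyToK Fq E') -
      TT Fq * polyToK Fq F * ξ * polyToK Fq F') * h2K
  have hk := kabs_sq_add (polyToK Fq E * ξ + polyToK Fq E') (polyToK Fq F * ξ + polyToK Fq F')
  rw [← e] at hk
  have hPne : P ≠ 0 := by
    rintro rfl
    simp [evalK] at hne
  have hHP := Hpoly_ge_one hPne
  have main : ∀ b a : Fq[X], nb b ^ 2 ≤ Hpoly Fq P → nb a ^ 2 ≤ Hpoly Fq P →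
      polyToK Fq b * ξ + polyToK Fq a ≠ 0 →
      kabs Fq (polyToK Fq b * ξ + polyToK Fq a) ^ 2 ≤ kabs Fq (evalK Fq P ξ) →
      c ^ 2 * Hpoly Fq P ^ (-s) ≤ kabs Fq (evalK Fq P ξ) := by
    intro b a hb ha hn hle
    obtain ⟨g1, g2, g3⟩ := linear_data b a ξ
    have g4 := h _ g1 (by rwa [g2])
    rw [g2] at g4
    have hQne : (C b * X + C a : Fq[X][X]) ≠ 0 := by
      intro h0
      rw [← g2, h0] at hn
      simp [evalK] at hn
    have hHQ := Hpoly_ge_one hQne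
    set HQ := Hpoly Fq (C b * X + C a) with hHQd
    have g5 : HQ ^ 2 ≤ Hpoly Fq P := by
      rcases le_max_iff.1 g3 with g | g
      · exact (pow_le_pow_left₀ (by linarith) g 2).trans hb
      · exact (pow_le_pow_left₀ (by linarith) g 2).trans ha
    have g6 : Hpoly Fq P ^ (-s) ≤ (HQ ^ (-s)) ^ 2 := by
      have : (HQ ^ (-s)) ^ 2 = (HQ ^ 2) ^ (-s) := by
        rw [← Real.rpow_natCast, ← Real.rpow_natCast, ← Real.rpow_mul (by linarith),
          ← Real.rpow_mul (by linarith), mul_comm]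
      rw [this]
      exact Real.rpow_le_rpow_of_nonpos (by positivity) g5 (by linarith)
    refine le_trans ?_ hle
    calc c ^ 2 * Hpoly Fq P ^ (-s) ≤ c ^ 2 * (HQ ^ (-s)) ^ 2 :=
          mul_le_mul_of_nonneg_left g6 (by positivity)
      _ = (c * HQ ^ (-s)) ^ 2 := by ring
      _ ≤ _ := pow_le_pow_left₀ (by positivity) g4 2
  have a1 := nb_sq_le_decomp hA
  have a2 := nb_sq_le_decomp hC
  have b1 := nb_coeff_le P 2
  have b2 := nb_coeff_le P 0
  by_cases hz : polyToK Fq E * ξ + polyToK Fq E' = 0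
  · by_cases hz' : polyToK Fq F * ξ + polyToK Fq F' = 0
    · rw [e, hz, hz'] at hne
      simp at hne
    · exact main F F' (a1.2.trans b1) (a2.2.trans b2) hz' hk.2
  · exact main E E' (a1.1.trans b1) (a2.1.trans b2) hz hk.1

lemma Lo_of_LoS {v : L Fq → ℝ} (hv : IsAbsExt Fq v) {ξ : K Fq} {s : ℝ} (h : LoS v ξ s) :
    Lo 2 ξ (s + 1) := by
  have hs := LoS_ge hv h
  obtain ⟨c1, hc1, hL1⟩ := Lo1_of_LoS hv h
  obtain ⟨c, hc, h⟩ := h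
  refine Lo_of_irr (by linarith) ⟨min c1 (min c (c1 ^ 2)), by positivity,
    fun P hd h0 hirr hne => ?_⟩
  have hp : 0 ≤ Hpoly Fq P ^ (-(s + 1)) := Real.rpow_nonneg (Hpoly_nonneg _) _
  by_cases hd1 : P.natDegree ≤ 1
  · exact (mul_le_mul_of_nonneg_right (min_le_left _ _) hp).trans (hL1 P hd1 hne)
  have hd2 : P.natDegree = 2 := by lia
  by_cases hdisc : P.coeff 1 ^ 2 - 4 * P.coeff 2 * P.coeff 0 = 0
  · have h2 := disc_zero_char hirr hd2 hdisc
    have h2' : (4 : Fq[X]) = 0 := by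
      have h22 := congrArg (C : Fq →+* Fq[X]) h2
      rw [map_ofNat, map_zero] at h22
      linear_combination 2 * h22
    have hB : P.coeff 1 = 0 := by
      rw [h2'] at hdisc
      simpa using hdisc
    refine (mul_le_mul_of_nonneg_right ?_ hp).trans
      (Lo_insep (by linarith) hc1 hL1 h2 hd hB hne)
    exact (min_le_right _ _).trans (min_le_right _ _)
  · obtain ⟨α, hα, hle⟩ := Lo_sep hv (ξ := ξ) hd2 hdisc
    obtain ⟨ha, hda, hh⟩ := alg_of_irr hirr h0 hα
    have hαξ : α ≠ toL Fq ξ := by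
      rintro rfl
      rw [evalL_toL] at hα
      exact hne ((map_eq_zero (algebraMap (K Fq) (L Fq))).1 hα)
    have h1 := h α ha (by lia) hαξ
    rw [hh, show -s - 1 = -(s + 1) by ring] at h1
    refine le_trans ?_ (h1.trans hle)
    exact mul_le_mul_of_nonneg_right ((min_le_right _ _).trans (min_le_left _ _)) hp

lemma wStar_le_wExp {v : L Fq → ℝ} (hv : IsAbsExt Fq v) (ξ : K Fq) :
    wStarExp Fq v 2 ξ ≤ wExp Fq 2 ξ := by
  refine EReal.le_of_forall_lt_iff_le.1 fun s hs => ?_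
  exact wStar_le_of_Lo hv (Lo_of_wExp_lt hs)

lemma wExp_le_wStar {v : L Fq → ℝ} (hv : IsAbsExt Fq v) (ξ : K Fq) :
    wExp Fq 2 ξ ≤ wStarExp Fq v 2 ξ + 1 := by
  rcases eq_or_ne (wStarExp Fq v 2 ξ) ⊤ with h | h
  · rw [h, EReal.top_add_of_ne_bot (x := (1 : EReal)) (EReal.coe_ne_bot 1)]; exact le_top
  refine EReal.le_of_forall_lt_iff_le.1 fun s hs => ?_
  have h1 : wStarExp Fq v 2 ξ < ((s - 1 : ℝ) : EReal) := by
    rw [EReal.coe_sub]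
    exact (EReal.lt_sub_iff_add_lt (Or.inl (EReal.coe_ne_bot 1))
      (Or.inl (EReal.coe_ne_top 1))).2 hs
  have := wExp_le_of_Lo (Lo_of_LoS hv (LoS_of_wStar_lt hv h1))
  simpa using this

end PartD

section PartE
variable {Fq}

lemma Lo_zero : Lo 2 (0 : K Fq) 0 := by
  refine ⟨1, one_pos, fun P _ h => ?_⟩
  have e : evalK Fq P 0 = polyToK Fq (P.coeff 0) := by
    rw [evalK, eval₂_at_zero]
  rw [e] at h ⊢
  rw [neg_zero, Real.rpow_zero, one_mul]
  refine nb_ge_one ?_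
  rintro h0
  rw [h0, map_zero] at h
  exact h rfl

lemma LoS_zero {v : L Fq → ℝ} (hv : IsAbsExt Fq v) {s : ℝ} (h : LoS v (0 : K Fq) s) : 0 ≤ s := by
  obtain ⟨c, hc, h⟩ := h
  by_contra hlt
  rw [not_le] at hlt
  have hq := one_lt_card (Fq := Fq)
  refine no_exp_bound hc (r := (Fintype.card Fq : ℝ) ^ (-s)) (B := 1)
    (Real.one_lt_rpow hq (by linarith)) 0 fun n _ => ?_
  obtain ⟨ha, hd, hh⟩ := tinv_data (Fq := Fq) n
  have hT := kabs_tinv (Fq := Fq) n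
  have hp : (0 : ℝ) < (Fintype.card Fq : ℝ) ^ n := by positivity
  have hne : (TT Fq)⁻¹ ^ n ≠ 0 := by
    rw [← kabs_pos_iff, hT]; positivity
  have h1 := h _ ha (by lia) (fun h => hne ((algebraMap (K Fq) (L Fq)).injective h))
  rw [hh, ← map_sub, hv.extends_kabs, kabs_sub_comm, sub_zero, hT] at h1
  have h2 : ((Fintype.card Fq : ℝ) ^ n) ^ (-s - 1) * (Fintype.card Fq : ℝ) ^ n
      = ((Fintype.card Fq : ℝ) ^ (-s)) ^ n := by
    rw [← Real.rpow_add_one (by positivity), ← Real.rpow_natCast, ← Real.rpow_natCast,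
      ← Real.rpow_mul (by positivity), ← Real.rpow_mul (by positivity)]
    congr 1; ring
  rw [← h2, ← mul_assoc]
  calc _ ≤ ((Fintype.card Fq : ℝ) ^ n)⁻¹ * (Fintype.card Fq : ℝ) ^ n := by gcongr
    _ = 1 := inv_mul_cancel₀ hp.ne'

lemma case_zero {v : L Fq → ℝ} (hv : IsAbsExt Fq v) :
    wExp Fq 2 (0 : K Fq) ≠ ⊤ ∧ wStarExp Fq v 2 (0 : K Fq) ≠ ⊤ ∧
      wExp Fq 2 (0 : K Fq) = wStarExp Fq v 2 (0 : K Fq) := by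
  have h1 := wExp_le_of_Lo (Lo_zero (Fq := Fq))
  have h2 := wStar_le_wExp hv (0 : K Fq)
  have h3 : wExp Fq 2 (0 : K Fq) ≤ wStarExp Fq v 2 (0 : K Fq) := by
    refine EReal.le_of_forall_lt_iff_le.1 fun s hs => ?_
    have := LoS_zero hv (LoS_of_wStar_lt hv hs)
    exact h1.trans (by exact_mod_cast this)
  have ht : wExp Fq 2 (0 : K Fq) ≠ ⊤ := fun h => by
    rw [h] at h1
    exact EReal.coe_ne_top 0 (top_le_iff.1 h1)
  refine ⟨ht, fun h => ?_, le_antisymm h3 h2⟩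
  rw [h] at h2
  exact ht (top_le_iff.1 h2)

end PartE

section PartF
variable {Fq}

lemma kabs_le_iff {f : K Fq} {N : ℕ} :
    kabs Fq f ≤ ((Fintype.card Fq : ℝ) ^ N)⁻¹ ↔ ∀ m : ℤ, m < N → f.coeff m = 0 := by
  have hq := one_lt_card (Fq := Fq)
  by_cases hf : f = 0
  · subst hf
    simp only [kabs_zero, HahnSeries.coeff_zero, implies_true, iff_true]
    positivity
  rw [kabs_of_ne hf, ← zpow_natCast, ← zpow_neg, zpow_le_zpow_iff_right₀ hq, neg_le_neg_iff]
  constructor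
  · intro h m hm
    exact HahnSeries.coeff_eq_zero_of_lt_order (lt_of_lt_of_le hm h)
  · intro h
    by_contra hlt
    rw [not_le] at hlt
    exact HahnSeries.coeff_order_eq_zero.not.2 hf (h _ hlt)

lemma exists_limit (x : ℕ → K Fq) (d : ℕ → ℕ) (hd : ∀ i, i ≤ d i) (hmono : Monotone d)
    (h0 : x 0 = 0)
    (h : ∀ i, kabs Fq (x (i + 1) - x i) ≤ ((Fintype.card Fq : ℝ) ^ d i)⁻¹) :
    ∃ ξ : K Fq, ∀ i, kabs Fq (ξ - x i) ≤ ((Fintype.card Fq : ℝ) ^ d i)⁻¹ := by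
  have hst : ∀ i j : ℕ, i ≤ j → ∀ m : ℤ, m < d i → (x j).coeff m = (x i).coeff m := by
    intro i j hij
    induction j, hij using Nat.le_induction with
    | base => intro m _; rfl
    | succ j hij ih =>
      intro m hm
      rw [← ih m hm]
      have := (kabs_le_iff.1 (h j)) m (lt_of_lt_of_le hm (by exact_mod_cast hmono hij))
      rwa [HahnSeries.coeff_sub, sub_eq_zero] at this
  have hneg : ∀ i, ∀ m : ℤ, m < 0 → (x i).coeff m = 0 := by
    intro i m hm
    rw [hst 0 i (Nat.zero_le _) m (by lia), h0, HahnSeries.coeff_zero]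
  refine ⟨HahnSeries.ofPowerSeries ℤ Fq (PowerSeries.mk fun n => (x (n + 1)).coeff n), fun i => ?_⟩
  rw [kabs_le_iff]
  intro m hm
  rw [HahnSeries.coeff_sub, sub_eq_zero]
  by_cases hm0 : m < 0
  · rw [hneg i m hm0]
    rw [HahnSeries.ofPowerSeries_apply]
    apply HahnSeries.embDomain_notin_range
    rintro ⟨n, hn⟩
    simp at hn
    lia
  · obtain ⟨n, rfl⟩ := Int.eq_ofNat_of_zero_le (not_lt.1 hm0)
    have e : (HahnSeries.ofPowerSeries ℤ Fq (PowerSeries.mk fun n => (x (n + 1)).coeff n)).coeff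
        (n : ℤ) = (x (n + 1)).coeff n := by
      have := HahnSeries.ofPowerSeries_apply_coeff (Γ := ℤ)
        (PowerSeries.mk fun n => (x (n + 1)).coeff n) n
      rw [PowerSeries.coeff_mk] at this
      exact_mod_cast this
    rw [e]
    rcases le_total (n + 1) i with hi | hi
    · refine (hst (n + 1) i hi n ?_).symm
      have := hd (n + 1)
      lia
    · exact hst i (n + 1) hi n hm

variable (Fq) in
/-- denominators -/
def qq (b : ℕ → ℕ) : ℕ → Fq[X]
  | 0 => 0
  | 1 => 1
  | (n + 2) => X ^ b n * qq b (n + 1) + qq b n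

variable (Fq) in
/-- numerators -/
def pp (b : ℕ → ℕ) : ℕ → Fq[X]
  | 0 => 1
  | 1 => 0
  | (n + 2) => X ^ b n * pp b (n + 1) + pp b n

/-- degrees -/
def DD (b : ℕ → ℕ) (i : ℕ) : ℕ := ∑ l ∈ Finset.range i, b l

lemma DD_succ (b : ℕ → ℕ) (i : ℕ) : DD b (i + 1) = DD b i + b i := Finset.sum_range_succ _ _

lemma det_cf (b : ℕ → ℕ) (i : ℕ) :
    qq Fq b (i + 1) * pp Fq b i - pp Fq b (i + 1) * qq Fq b i = (-1) ^ i := by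
  induction i with
  | zero => simp [qq, pp]
  | succ i ih =>
    rw [qq, pp, pow_succ, ← ih]; ring

lemma qq_nb {b : ℕ → ℕ} (hb : ∀ i, 1 ≤ b i) (i : ℕ) :
    nb (qq Fq b (i + 1)) = (Fintype.card Fq : ℝ) ^ DD b i ∧
      nb (qq Fq b i) < nb (qq Fq b (i + 1)) := by
  have hq := one_lt_card (Fq := Fq)
  induction i with
  | zero => simp [qq, DD, nb_one, nb_zero]
  | succ i ih =>
    obtain ⟨h1, h2⟩ := ih
    have h3 : nb (X ^ b i * qq Fq b (i + 1)) = (Fintype.card Fq : ℝ) ^ DD b (i + 1) := by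
      rw [nb_mul, nb_pow, nb_X, h1, DD_succ, pow_add, mul_comm]
    have h4 : nb (qq Fq b (i + 1)) < nb (X ^ b i * qq Fq b (i + 1)) := by
      rw [h3, h1]
      exact pow_lt_pow_right₀ hq (by rw [DD_succ]; have := hb i; lia)
    have h5 : nb (qq Fq b (i + 2)) = nb (X ^ b i * qq Fq b (i + 1)) := by
      rw [qq, nb, map_add]
      exact kabs_add_eq (h2.trans h4)
    exact ⟨h5.trans h3, h5 ▸ h4⟩

lemma pp_nb {b : ℕ → ℕ} (hb : ∀ i, 1 ≤ b i) (i : ℕ) :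
    nb (pp Fq b (i + 1)) ≤ nb (qq Fq b (i + 1)) ∧ nb (pp Fq b (i + 2)) ≤ nb (qq Fq b (i + 2)) := by
  have hq := one_lt_card (Fq := Fq)
  induction i with
  | zero =>
    refine ⟨by simp [pp, qq, nb_zero, nb_one], ?_⟩
    rw [(qq_nb hb 1).1]
    simp only [pp, mul_zero, zero_add, nb_one]
    exact one_le_pow₀ hq.le
  | succ i ih =>
    refine ⟨ih.2, ?_⟩
    rw [pp]
    refine (nb_add_le _ _).trans (max_le ?_ ?_)
    · have h3 : nb (X ^ b (i + 1) * qq Fq b (i + 2)) = nb (qq Fq b (i + 3)) := by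
        rw [nb_mul, nb_pow, nb_X, (qq_nb hb (i + 1)).1, (qq_nb hb (i + 2)).1, DD_succ b (i + 1),
          pow_add, mul_comm]
      rw [← h3, nb_mul, nb_mul]
      exact mul_le_mul_of_nonneg_left ih.2 (nb_nonneg _)
    · exact ih.1.trans ((qq_nb hb (i + 1)).2.le.trans (qq_nb hb (i + 2)).2.le)

lemma DD_mono {b : ℕ → ℕ} : Monotone (DD b) :=
  monotone_nat_of_le_succ fun i => by rw [DD_succ]; lia

lemma le_DD {b : ℕ → ℕ} (hb : ∀ i, 1 ≤ b i) (i : ℕ) : i ≤ DD b i := by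
  induction i with
  | zero => exact Nat.zero_le _
  | succ i ih => rw [DD_succ]; have := hb i; lia

theorem exists_cf {b : ℕ → ℕ} (hb : ∀ i, 1 ≤ b i) : ∃ ξ : K Fq, ∀ i,
    kabs Fq (polyToK Fq (qq Fq b i) * ξ - polyToK Fq (pp Fq b i)) =
      ((Fintype.card Fq : ℝ) ^ DD b i)⁻¹ := by
  have hq := one_lt_card (Fq := Fq)
  have hq0 : ∀ i, polyToK Fq (qq Fq b (i + 1)) ≠ 0 := by
    intro i
    rw [← kabs_pos_iff]
    have := (qq_nb (Fq := Fq) hb i).1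
    rw [nb] at this
    rw [this]; positivity
  set x : ℕ → K Fq := fun i => polyToK Fq (pp Fq b (i + 1)) / polyToK Fq (qq Fq b (i + 1)) with hx
  have hdiff : ∀ i, kabs Fq (x (i + 1) - x i) =
      ((Fintype.card Fq : ℝ) ^ (DD b i + DD b (i + 1)))⁻¹ := by
    intro i
    have e : x (i + 1) - x i = -((-1) ^ (i + 1) * (polyToK Fq (qq Fq b (i + 1)) *
        polyToK Fq (qq Fq b (i + 2)))⁻¹) := by
      have hd := congrArg (polyToK Fq) (det_cf (Fq := Fq) b (i + 1))
      simp only [map_sub, map_mul, map_pow, map_neg, map_one] at hd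
      rw [← hd, hx]
      have h1 := hq0 i
      have h2 := hq0 (i + 1)
      field_simp
      ring
    rw [e, kabs_neg, kabs_mul, kabs_pow, kabs_neg, kabs_one, one_pow, one_mul, kabs_inv, kabs_mul,
      pow_add]
    have h1 := (qq_nb (Fq := Fq) hb i).1
    have h2 := (qq_nb (Fq := Fq) hb (i + 1)).1
    rw [nb] at h1 h2
    rw [h1, h2]
  obtain ⟨ξ, hξ⟩ := exists_limit x (fun i => DD b i + DD b (i + 1))
    (fun i => (le_DD hb i).trans (Nat.le_add_right _ _))
    (fun i j hij => Nat.add_le_add (DD_mono hij) (DD_mono (by lia)))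
    (by simp [hx, pp]) (fun i => (hdiff i).le)
  refine ⟨ξ, fun i => ?_⟩
  rcases i with _ | i
  · simp [qq, pp, DD, kabs_neg, kabs_one]
  have h1 : kabs Fq (ξ - x i) = ((Fintype.card Fq : ℝ) ^ (DD b i + DD b (i + 1)))⁻¹ := by
    rw [← hdiff i, show ξ - x i = (x (i + 1) - x i) + (ξ - x (i + 1)) by ring]
    apply kabs_add_eq
    refine lt_of_le_of_lt (hξ (i + 1)) ?_
    rw [hdiff i]
    apply inv_strictAnti₀ (by positivity)
    apply pow_lt_pow_right₀ hq
    have := hb i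
    have := hb (i + 1)
    rw [DD_succ b (i + 1), DD_succ b i]
    lia
  have e : polyToK Fq (qq Fq b (i + 1)) * ξ - polyToK Fq (pp Fq b (i + 1)) =
      polyToK Fq (qq Fq b (i + 1)) * (ξ - x i) := by
    rw [mul_sub, hx]
    simp only
    rw [mul_div_cancel₀ _ (hq0 i)]
  have h2 := (qq_nb (Fq := Fq) hb i).1
  rw [nb] at h2
  rw [e, kabs_mul, h1, h2, pow_add]
  field_simp

end PartF

section PartG
variable {Fq}

lemma liouville {P Q : Fq[X][X]} (hP : Irreducible P) (hP0 : P.natDegree ≠ 0)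
    (hP2 : P.natDegree ≤ 2) (hQ : Irreducible Q) (hQ2 : Q.natDegree = 2)
    (hna : ¬ Associated P Q) {ξ : K Fq} (hξ : kabs Fq ξ ≤ 1) :
    1 ≤ Hpoly Fq P * Hpoly Fq Q * max (Hpoly Fq P * kabs Fq (evalK Fq Q ξ))
      (Hpoly Fq Q * kabs Fq (evalK Fq P ξ)) := by
  have hHP := Hpoly_nonneg P
  have hHQ := Hpoly_nonneg Q
  set x := evalK Fq P ξ with hx
  set y := evalK Fq Q ξ with hy
  rw [evalK_quad hP2] at hx
  rw [evalK_quad hQ2.le] at hy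
  have hres : (P.coeff 2 * Q.coeff 0 - P.coeff 0 * Q.coeff 2) ^ 2 -
      (P.coeff 2 * Q.coeff 1 - P.coeff 1 * Q.coeff 2) *
      (P.coeff 1 * Q.coeff 0 - P.coeff 0 * Q.coeff 1) ≠ 0 := by
    intro h
    obtain ⟨α, hα⟩ := exists_root (P := Q) (by lia)
    obtain ⟨β, h1, h0, hβ⟩ := quad_factor hQ2 hα
    have e : (φ Fq (Q.coeff 2)) ^ 2 * (evalL Fq P α * evalL Fq P β) = 0 := by
      have := congrArg (φ Fq) h
      simp only [map_sub, map_mul, map_pow, h1, h0, map_zero] at this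
      rw [evalL_quad hP2, evalL_quad hP2]
      linear_combination this
    have hd : φ Fq (Q.coeff 2) ≠ 0 := by
      intro h2
      have h3 : Q.coeff 2 = 0 := φ_inj (by rw [h2, map_zero])
      have : Q.coeff Q.natDegree ≠ 0 := leadingCoeff_ne_zero.2 hQ.ne_zero
      rw [hQ2] at this
      exact this h3
    rcases mul_eq_zero.1 ((mul_eq_zero.1 e).resolve_left (pow_ne_zero 2 hd)) with h4 | h4
    · exact hna (assoc_of_common_root hP hQ hP0 (by lia) h4 hα)
    · exact hna (assoc_of_common_root hP hQ hP0 (by lia) h4 hβ)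
  have h1 := nb_ge_one hres
  set a := P.coeff 2 with ha
  set b := P.coeff 1 with hb
  set c := P.coeff 0 with hc
  set d := Q.coeff 2 with hd
  set e := Q.coeff 1 with he
  set f := Q.coeff 0 with hf
  have haH : nb a ≤ Hpoly Fq P := nb_coeff_le _ _
  have hbH : nb b ≤ Hpoly Fq P := nb_coeff_le _ _
  have hcH : nb c ≤ Hpoly Fq P := nb_coeff_le _ _
  have hdH : nb d ≤ Hpoly Fq Q := nb_coeff_le _ _
  have heH : nb e ≤ Hpoly Fq Q := nb_coeff_le _ _
  have hfH : nb f ≤ Hpoly Fq Q := nb_coeff_le _ _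
  have hΔ : ∀ s t u w : Fq[X], nb s ≤ Hpoly Fq P → nb t ≤ Hpoly Fq Q → nb u ≤ Hpoly Fq P →
      nb w ≤ Hpoly Fq Q → nb (s * t - u * w) ≤ Hpoly Fq P * Hpoly Fq Q := by
    intro s t u w h1 h2 h3 h4
    refine (nb_sub_le _ _).trans (max_le ?_ ?_) <;> rw [nb_mul]
    · exact mul_le_mul h1 h2 (nb_nonneg _) hHP
    · exact mul_le_mul h3 h4 (nb_nonneg _) hHP
  have hM : ∀ s t : Fq[X], nb s ≤ Hpoly Fq P → nb t ≤ Hpoly Fq Q →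
      kabs Fq (polyToK Fq s * y - polyToK Fq t * x) ≤
        max (Hpoly Fq P * kabs Fq y) (Hpoly Fq Q * kabs Fq x) := by
    intro s t h1 h2
    refine (kabs_sub_le _ _).trans (max_le_max ?_ ?_) <;> rw [kabs_mul]
    · exact mul_le_mul_of_nonneg_right h1 (kabs_nonneg _)
    · exact mul_le_mul_of_nonneg_right h2 (kabs_nonneg _)
  set M := max (Hpoly Fq P * kabs Fq y) (Hpoly Fq Q * kabs Fq x) with hMdef
  have hM0 : 0 ≤ M := le_max_of_le_left (mul_nonneg hHP (kabs_nonneg _))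
  have key : polyToK Fq ((a * f - c * d) ^ 2 - (a * e - b * d) * (b * f - c * e)) =
      polyToK Fq (a * f - c * d) * (polyToK Fq a * y - polyToK Fq d * x) -
      polyToK Fq (a * e - b * d) * (ξ * (polyToK Fq a * y - polyToK Fq d * x)
        + (polyToK Fq b * y - polyToK Fq e * x)) := by
    rw [hx, hy]
    simp only [map_sub, map_mul, map_pow]
    ring
  rw [nb, key] at h1
  refine h1.trans ((kabs_sub_le _ _).trans (max_le ?_ ?_)) <;> rw [kabs_mul]
  · exact mul_le_mul (hΔ _ _ _ _ haH hfH hcH hdH) (hM _ _ haH hdH) (kabs_nonneg _) (by positivity)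
  · refine mul_le_mul (hΔ _ _ _ _ haH heH hbH hdH) ?_ (kabs_nonneg _) (by positivity)
    refine (kabs_add_le _ _).trans (max_le ?_ (hM _ _ hbH heH))
    rw [kabs_mul]
    have := hM _ _ haH hdH
    have h3 := kabs_nonneg (polyToK Fq a * y - polyToK Fq d * x)
    nlinarith

lemma nb_unit {A : Fq[X]} (h : IsUnit A) : nb A = 1 := by
  rw [nb_eq h.ne_zero, natDegree_eq_zero_of_isUnit h, pow_zero]

lemma no_form_zero {R l m : Fq[X]} (hR : 1 < nb R) (h : m ^ 2 + R * l * m - l ^ 2 = 0) :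
    l = 0 ∧ m = 0 := by
  by_cases hm : m = 0
  · subst hm
    simp at h
    exact ⟨h, rfl⟩
  exfalso
  obtain ⟨l', m', c, hrel, rfl, rfl⟩ := UniqueFactorizationMonoid.exists_reduced_factors' l m hm
  have hc : c ≠ 0 := left_ne_zero_of_mul hm
  have h' : m' ^ 2 + R * l' * m' - l' ^ 2 = 0 := by
    have : c ^ 2 * (m' ^ 2 + R * l' * m' - l' ^ 2) = 0 := by linear_combination h
    exact (mul_eq_zero.1 this).resolve_left (pow_ne_zero 2 hc)
  have u1 : IsUnit m' := (hrel.pow_left (m := 2)) (Dvd.intro (m' + R * l') (by linear_combination h')) dvd_rfl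
  have u2 : IsUnit l' := (hrel.pow_right (n := 2)) dvd_rfl (Dvd.intro (l' - R * m') (by linear_combination -h'))
  have e : R * l' * m' = l' ^ 2 - m' ^ 2 := by linear_combination h'
  have := congrArg nb e
  rw [nb_mul, nb_mul, nb_unit u1, nb_unit u2, mul_one, mul_one] at this
  have h3 := nb_sub_le (l' ^ 2) (m' ^ 2)
  rw [nb_pow, nb_pow, nb_unit u1, nb_unit u2, one_pow, max_self] at h3
  linarith

/-- leading coefficient -/
def PA (R q₁ q₀ : Fq[X]) : Fq[X] := q₀ ^ 2 + R * q₁ * q₀ - q₁ ^ 2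
/-- middle coefficient -/
def PB (R q₁ q₀ p₁ p₀ : Fq[X]) : Fq[X] :=
  -(2 * q₀ * p₀ + R * (q₁ * p₀ + q₀ * p₁) - 2 * q₁ * p₁)

/-- the quadratic polynomial attached to a periodic continued fraction -/
def PQ (R q₁ q₀ p₁ p₀ : Fq[X]) : Fq[X][X] :=
  C (PA R q₁ q₀) * X ^ 2 + C (PB R q₁ q₀ p₁ p₀) * X + C (PA R p₁ p₀)

lemma PQ_coeff (R q₁ q₀ p₁ p₀ : Fq[X]) : (PQ R q₁ q₀ p₁ p₀).coeff 2 = PA R q₁ q₀ ∧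
    (PQ R q₁ q₀ p₁ p₀).coeff 1 = PB R q₁ q₀ p₁ p₀ ∧ (PQ R q₁ q₀ p₁ p₀).coeff 0 = PA R p₁ p₀ := by
  rw [PQ]
  generalize PA R q₁ q₀ = a
  generalize PB R q₁ q₀ p₁ p₀ = b
  generalize PA R p₁ p₀ = c
  refine ⟨?_, ?_, ?_⟩ <;> simp [coeff_X, coeff_C]

lemma PQ_natDegree {R q₁ q₀ : Fq[X]} (h : PA R q₁ q₀ ≠ 0) (p₁ p₀ : Fq[X]) :
    (PQ R q₁ q₀ p₁ p₀).natDegree = 2 := natDegree_quadratic h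

lemma PQ_irr {R q₁ q₀ p₁ p₀ : Fq[X]} (h : PA R q₁ q₀ ≠ 0) (hR : 1 < nb R) {ε : Fq[X]}
    (hε : ε ^ 2 = 1) (hdet : q₁ * p₀ - p₁ * q₀ = ε) : Irreducible (PQ R q₁ q₀ p₁ p₀) := by
  have hd := PQ_natDegree h p₁ p₀
  obtain ⟨c2, c1, c0⟩ := PQ_coeff R q₁ q₀ p₁ p₀
  set P := PQ R q₁ q₀ p₁ p₀ with hPdef
  have hP0 : P ≠ 0 := by rintro h0; rw [h0] at hd; simp at hd
  have hconst : ∀ a : Fq[X], C a ∣ P → IsUnit (C a : Fq[X][X]) := by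
    intro a ha
    rw [C_dvd_iff_dvd_coeff] at ha
    have h2 := ha 2
    have h1 := ha 1
    have h0 := ha 0
    rw [c2] at h2; rw [c1] at h1; rw [c0] at h0
    rw [isUnit_C]
    apply isUnit_of_dvd_one
    have h3 : a ∣ PA R q₁ q₀ * p₀ ^ 2 + PB R q₁ q₀ p₁ p₀ * (p₀ * q₀) + PA R p₁ p₀ * q₀ ^ 2 :=
      dvd_add (dvd_add (h2.mul_right _) (h1.mul_right _)) (h0.mul_right _)
    have e : PA R q₁ q₀ * p₀ ^ 2 + PB R q₁ q₀ p₁ p₀ * (p₀ * q₀) + PA R p₁ p₀ * q₀ ^ 2 = -1 := by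
      rw [← hε, ← hdet, PA, PB, PA]; ring
    rw [e] at h3
    exact (dvd_neg).1 h3
  refine ⟨fun hu => ?_, fun {F G} hFG => ?_⟩
  · have := natDegree_eq_zero_of_isUnit hu
    lia
  have hF0 : F ≠ 0 := by rintro rfl; rw [zero_mul] at hFG; exact hP0 hFG
  have hG0 : G ≠ 0 := by rintro rfl; rw [mul_zero] at hFG; exact hP0 hFG
  have hdeg : F.natDegree + G.natDegree = 2 := by
    rw [← natDegree_mul hF0 hG0, ← hFG, hd]
  by_cases hF : F.natDegree = 0
  · left
    rw [eq_C_of_natDegree_eq_zero hF] at hFG ⊢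
    exact hconst _ (Dvd.intro _ hFG.symm)
  by_cases hG : G.natDegree = 0
  · right
    rw [eq_C_of_natDegree_eq_zero hG] at hFG ⊢
    exact hconst _ (Dvd.intro_left _ hFG.symm)
  exfalso
  have hF1 : F.natDegree = 1 := by lia
  have hG1 : G.natDegree = 1 := by lia
  obtain ⟨f1, f0, hf⟩ := exists_eq_X_add_C_of_natDegree_le_one hF1.le
  obtain ⟨g1, g0, hg⟩ := exists_eq_X_add_C_of_natDegree_le_one hG1.le
  have hf1 : f1 ≠ 0 := by
    rintro rfl
    rw [hf] at hF1
    simp at hF1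
  have hprod : P = C (f1 * g1) * X ^ 2 + C (f1 * g0 + f0 * g1) * X + C (f0 * g0) := by
    rw [hFG, hf, hg]; simp only [C_mul, C_add]; ring
  have d2 : P.coeff 2 = f1 * g1 := by
    rw [hprod]; generalize f1 * g1 = a; generalize f1 * g0 + f0 * g1 = b; generalize f0 * g0 = c
    simp [coeff_X, coeff_C]
  have d1 : P.coeff 1 = f1 * g0 + f0 * g1 := by
    rw [hprod]; generalize f1 * g1 = a; generalize f1 * g0 + f0 * g1 = b; generalize f0 * g0 = c
    simp [coeff_X, coeff_C]
  have d0 : P.coeff 0 = f0 * g0 := by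
    rw [hprod]; generalize f1 * g1 = a; generalize f1 * g0 + f0 * g1 = b; generalize f0 * g0 = c
    simp
  have hz : (q₀ * (-f0) - p₀ * f1) ^ 2 + R * (q₁ * (-f0) - p₁ * f1) * (q₀ * (-f0) - p₀ * f1) -
      (q₁ * (-f0) - p₁ * f1) ^ 2 = 0 := by
    have e : PA R q₁ q₀ * f0 ^ 2 - PB R q₁ q₀ p₁ p₀ * (f0 * f1) + PA R p₁ p₀ * f1 ^ 2 = 0 := by
      rw [← c2, ← c1, ← c0, d2, d1, d0]; ring
    rw [PA, PB, PA] at e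
    linear_combination e
  obtain ⟨hl, hm⟩ := no_form_zero hR hz
  have : ε * f1 = 0 := by
    rw [← hdet]; linear_combination q₀ * hl - q₁ * hm
  rcases mul_eq_zero.1 this with h4 | h4
  · rw [h4] at hε; simp at hε
  · exact hf1 h4

lemma PQ_evalK (R q₁ q₀ p₁ p₀ : Fq[X]) (ξ : K Fq) : evalK Fq (PQ R q₁ q₀ p₁ p₀) ξ =
    (polyToK Fq q₀ * ξ - polyToK Fq p₀) ^ 2 + polyToK Fq R * (polyToK Fq q₁ * ξ - polyToK Fq p₁) *
      (polyToK Fq q₀ * ξ - polyToK Fq p₀) - (polyToK Fq q₁ * ξ - polyToK Fq p₁) ^ 2 := by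
  obtain ⟨c2, c1, c0⟩ := PQ_coeff R q₁ q₀ p₁ p₀
  have hd : (PQ R q₁ q₀ p₁ p₀).natDegree ≤ 2 := natDegree_quadratic_le
  rw [evalK_quad hd, c2, c1, c0, PA, PB, PA]
  simp only [map_sub, map_mul, map_pow, map_add, map_neg, map_ofNat]
  ring

end PartG

section PartH
variable {Fq}

variable (Fq) in
/-- the approximating quadratic polynomials -/
def PN (b : ℕ → ℕ) (r k : ℕ) : Fq[X][X] :=
  PQ (X ^ k) (qq Fq b (r + 1)) (qq Fq b r) (pp Fq b (r + 1)) (pp Fq b r)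

variable (Fq) in
/-- the defining property of the number attached to `b` -/
def IsCF (b : ℕ → ℕ) (ξ : K Fq) : Prop := ∀ i,
    kabs Fq (polyToK Fq (qq Fq b i) * ξ - polyToK Fq (pp Fq b i)) =
      ((Fintype.card Fq : ℝ) ^ DD b i)⁻¹

lemma cf_le_one {b : ℕ → ℕ} {ξ : K Fq} (h : IsCF Fq b ξ) : kabs Fq ξ ≤ 1 := by
  have := h 1
  simp only [qq, pp, map_one, map_zero, one_mul, sub_zero] at this
  rw [this]
  exact inv_le_one_of_one_le₀ (one_le_pow₀ one_lt_card.le)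

lemma PN_step {b : ℕ → ℕ} {r e k : ℕ} (hre : r ≤ e) (hk : ∀ i, r ≤ i → i < e → b i = k)
    (ξ : K Fq) : kabs Fq (evalK Fq (PN Fq b r k) ξ) = kabs Fq (evalK Fq (PN Fq b e k) ξ) := by
  induction e, hre using Nat.le_induction with
  | base => rfl
  | succ e hre ih =>
    rw [ih fun i h1 h2 => hk i h1 (by lia)]
    have hbe := hk e hre (by lia)
    rw [← kabs_neg, PN, PN, PQ_evalK, PQ_evalK, qq, pp, hbe]
    congr 1
    simp only [map_add, map_mul]
    ring

lemma PN_eval {b : ℕ → ℕ} {r e k : ℕ} (hre : r ≤ e) (hk : ∀ i, r ≤ i → i < e → b i = k)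
    (hbe : k < b e) {ξ : K Fq} (hξ : IsCF Fq b ξ) :
    kabs Fq (evalK Fq (PN Fq b r k) ξ) = ((Fintype.card Fq : ℝ) ^ (2 * DD b e))⁻¹ := by
  have hq := one_lt_card (Fq := Fq)
  have h0 := hξ e
  have h1 := hξ (e + 1)
  rw [PN_step hre hk, PN, PQ_evalK]
  set x := polyToK Fq (qq Fq b e) * ξ - polyToK Fq (pp Fq b e) with hx
  set y := polyToK Fq (qq Fq b (e + 1)) * ξ - polyToK Fq (pp Fq b (e + 1)) with hy
  have hR : kabs Fq (polyToK Fq (X ^ k)) = (Fintype.card Fq : ℝ) ^ k := by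
    rw [map_pow, kabs_pow, polyToK_X, kabs_T]
  have e1 : kabs Fq (x ^ 2) = ((Fintype.card Fq : ℝ) ^ (2 * DD b e))⁻¹ := by
    rw [kabs_pow, h0, inv_pow, ← pow_mul, mul_comm]
  rw [← e1, add_sub_assoc]
  apply kabs_add_eq
  have hx0 : 0 < kabs Fq x := by rw [h0]; positivity
  have hyx : kabs Fq y * (Fintype.card Fq : ℝ) ^ b e = kabs Fq x := by
    rw [h0, h1, DD_succ, pow_add, mul_inv, mul_assoc, inv_mul_cancel₀ (by positivity), mul_one]
  have hy0 := kabs_nonneg y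
  have hlt : (Fintype.card Fq : ℝ) ^ k < (Fintype.card Fq : ℝ) ^ b e := pow_lt_pow_right₀ hq hbe
  have hk1 : 1 ≤ (Fintype.card Fq : ℝ) ^ k := one_le_pow₀ hq.le
  have hy0' : 0 < kabs Fq y := by rw [h1]; positivity
  refine lt_of_le_of_lt (kabs_sub_le _ _) (max_lt ?_ ?_)
  · rw [kabs_mul, kabs_mul, hR, kabs_pow, pow_two]
    apply mul_lt_mul_of_pos_right _ hx0
    rw [← hyx, mul_comm]
    exact mul_lt_mul_of_pos_left hlt hy0'
  · rw [kabs_pow, kabs_pow]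
    apply pow_lt_pow_left₀ _ hy0 two_ne_zero
    rw [← hyx]
    nlinarith

lemma PN_A {b : ℕ → ℕ} (hb : ∀ i, 1 ≤ b i) {s k : ℕ} (hk : b s < k) :
    nb (PA (X ^ k) (qq Fq b (s + 2)) (qq Fq b (s + 1))) =
      (Fintype.card Fq : ℝ) ^ (2 * DD b s + b s + k) := by
  have hq := one_lt_card (Fq := Fq)
  have h1 := (qq_nb (Fq := Fq) hb s).1
  have h2 := (qq_nb (Fq := Fq) hb (s + 1)).1
  have hs := hb s
  have e : nb (X ^ k * qq Fq b (s + 2) * qq Fq b (s + 1)) =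
      (Fintype.card Fq : ℝ) ^ (2 * DD b s + b s + k) := by
    rw [nb_mul, nb_mul, nb_pow, nb_X, h1, h2, ← pow_add, ← pow_add, DD_succ]; congr 1; ring
  rw [← e, PA, show (qq Fq b (s + 1)) ^ 2 + X ^ k * qq Fq b (s + 2) * qq Fq b (s + 1) -
    (qq Fq b (s + 2)) ^ 2 = X ^ k * qq Fq b (s + 2) * qq Fq b (s + 1) + ((qq Fq b (s + 1)) ^ 2 -
    (qq Fq b (s + 2)) ^ 2) by ring, nb, map_add]
  apply kabs_add_eq
  refine lt_of_le_of_lt (nb_sub_le _ _) (max_lt ?_ ?_) <;> refine lt_of_lt_of_eq ?_ e.symm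
  · rw [nb_pow, h1, ← pow_mul]; exact pow_lt_pow_right₀ hq (by lia)
  · rw [nb_pow, h2, ← pow_mul, DD_succ]; exact pow_lt_pow_right₀ hq (by lia)

lemma PN_spec {b : ℕ → ℕ} (hb : ∀ i, 1 ≤ b i) {s k : ℕ} (hk : b s < k) :
    Irreducible (PN Fq b (s + 1) k) ∧ (PN Fq b (s + 1) k).natDegree = 2 ∧
    Hpoly Fq (PN Fq b (s + 1) k) = (Fintype.card Fq : ℝ) ^ (2 * DD b s + b s + k) ∧
    nb ((PN Fq b (s + 1) k).coeff 2) = (Fintype.card Fq : ℝ) ^ (2 * DD b s + b s + k) := by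
  have hq := one_lt_card (Fq := Fq)
  have hA := PN_A (Fq := Fq) hb hk
  have hA0 : PA (X ^ k) (qq Fq b (s + 2)) (qq Fq b (s + 1)) ≠ 0 := by
    intro h
    rw [h, nb_zero] at hA
    have : 0 < (Fintype.card Fq : ℝ) ^ (2 * DD b s + b s + k) := by positivity
    linarith
  have hnd : (PN Fq b (s + 1) k).natDegree = 2 := PQ_natDegree hA0 _ _
  obtain ⟨c2, c1, c0⟩ := PQ_coeff (X ^ k) (qq Fq b (s + 2)) (qq Fq b (s + 1))
    (pp Fq b (s + 2)) (pp Fq b (s + 1))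
  have hc2 : nb ((PN Fq b (s + 1) k).coeff 2) =
      (Fintype.card Fq : ℝ) ^ (2 * DD b s + b s + k) := by rw [← hA, ← c2]; rfl
  refine ⟨PQ_irr hA0 ?_ (ε := (-1) ^ (s + 1)) ?_ (det_cf b (s + 1)), hnd, ?_, hc2⟩
  · rw [nb_pow, nb_X]; exact one_lt_pow₀ hq (by lia)
  · rw [← pow_mul, mul_comm, pow_mul, neg_one_sq, one_pow]
  apply le_antisymm
  · have h1 := (qq_nb (Fq := Fq) hb s).1
    have h2 := (qq_nb (Fq := Fq) hb (s + 1)).1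
    obtain ⟨h3, h4⟩ := pp_nb (Fq := Fq) hb s
    set q₀ := qq Fq b (s + 1)
    set q₁ := qq Fq b (s + 2)
    set p₀ := pp Fq b (s + 1)
    set p₁ := pp Fq b (s + 2)
    rw [h1] at h3
    rw [h2] at h4
    have h1 := h1.le
    have h2 := h2.le
    set H := (Fintype.card Fq : ℝ) ^ (2 * DD b s + b s + k) with hH
    have m00 : ∀ x y : Fq[X], nb x ≤ (Fintype.card Fq : ℝ) ^ DD b s →
        nb y ≤ (Fintype.card Fq : ℝ) ^ DD b s → nb (x * y) ≤ H := by
      intro x y hx hy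
      rw [nb_mul]
      refine (mul_le_mul hx hy (nb_nonneg _) (by positivity)).trans ?_
      rw [← pow_add]
      exact pow_le_pow_right₀ hq.le (by lia)
    have m11 : ∀ x y : Fq[X], nb x ≤ (Fintype.card Fq : ℝ) ^ DD b (s + 1) →
        nb y ≤ (Fintype.card Fq : ℝ) ^ DD b (s + 1) → nb (x * y) ≤ H := by
      intro x y hx hy
      rw [nb_mul]
      refine (mul_le_mul hx hy (nb_nonneg _) (by positivity)).trans ?_
      rw [← pow_add]
      exact pow_le_pow_right₀ hq.le (by rw [DD_succ]; lia)
    have m01 : ∀ x y : Fq[X], nb x ≤ (Fintype.card Fq : ℝ) ^ DD b (s + 1) →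
        nb y ≤ (Fintype.card Fq : ℝ) ^ DD b s → nb (X ^ k * (x * y)) ≤ H := by
      intro x y hx hy
      rw [nb_mul, nb_mul, nb_pow, nb_X]
      refine (mul_le_mul_of_nonneg_left (mul_le_mul hx hy (nb_nonneg _) (by positivity))
        (by positivity)).trans ?_
      rw [← pow_add, ← pow_add]
      exact pow_le_pow_right₀ hq.le (by rw [DD_succ]; lia)
    apply Hpoly_le
    intro i
    rcases i with _ | _ | _ | i
    · change nb ((PQ _ _ _ _ _).coeff 0) ≤ H
      rw [c0, PA, pow_two, pow_two, mul_assoc]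
      exact (nb_sub_le _ _).trans (max_le ((nb_add_le _ _).trans (max_le (m00 _ _ h3 h3)
        (m01 _ _ h4 h3))) (m11 _ _ h4 h4))
    · change nb ((PQ _ _ _ _ _).coeff 1) ≤ H
      rw [c1, PB, nb_neg]
      have two : ∀ x : Fq[X], nb x ≤ H → nb (2 * x) ≤ H := by
        intro x hx
        rw [two_mul]
        exact (nb_add_le _ _).trans (max_le hx hx)
      rw [mul_assoc, mul_assoc, mul_add]
      refine (nb_sub_le _ _).trans (max_le ((nb_add_le _ _).trans (max_le (two _ (m00 _ _ h1 h3))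
        ((nb_add_le _ _).trans (max_le (m01 _ _ h2 h3) ?_)))) (two _ (m11 _ _ h2 h4)))
      rw [mul_comm q₀]
      exact m01 _ _ h4 h1
    · rw [hc2]
    · rw [coeff_eq_zero_of_natDegree_lt (by lia), nb_zero]; positivity
  · rw [← hc2]; exact nb_coeff_le _ _

lemma PN_deriv {b : ℕ → ℕ} (hb : ∀ i, 1 ≤ b i) {s k : ℕ} {ξ : K Fq}
    (hξ : IsCF Fq b ξ) :
    kabs Fq (2 * polyToK Fq ((PN Fq b (s + 1) k).coeff 2) * ξ +
      polyToK Fq ((PN Fq b (s + 1) k).coeff 1)) = (Fintype.card Fq : ℝ) ^ k := by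
  have hq := one_lt_card (Fq := Fq)
  obtain ⟨c2, c1, c0⟩ := PQ_coeff (X ^ k) (qq Fq b (s + 2)) (qq Fq b (s + 1))
    (pp Fq b (s + 2)) (pp Fq b (s + 1))
  have h1 := (qq_nb (Fq := Fq) hb s).1
  have h2 := (qq_nb (Fq := Fq) hb (s + 1)).1
  have l0 := hξ (s + 1)
  have l1 := hξ (s + 2)
  rw [PN, c2, c1, PA, PB]
  rw [nb] at h1 h2
  set q₀ := qq Fq b (s + 1)
  set q₁ := qq Fq b (s + 2)
  set p₀ := pp Fq b (s + 1)
  set p₁ := pp Fq b (s + 2)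
  set x := polyToK Fq q₀ * ξ - polyToK Fq p₀ with hx
  set y := polyToK Fq q₁ * ξ - polyToK Fq p₁ with hy
  have hR : kabs Fq (polyToK Fq (X ^ k)) = (Fintype.card Fq : ℝ) ^ k := by
    rw [map_pow, kabs_pow, polyToK_X, kabs_T]
  have e1 : kabs Fq (polyToK Fq q₁ * x) = 1 := by
    rw [kabs_mul, h2, l0, mul_inv_cancel₀ (by positivity)]
  have small : ∀ m n : ℕ, m < n → (Fintype.card Fq : ℝ) ^ m * ((Fintype.card Fq : ℝ) ^ n)⁻¹ < 1 := by
    intro m n hmn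
    rw [mul_inv_lt_iff₀ (by positivity), one_mul]
    exact pow_lt_pow_right₀ hq hmn
  have hs := hb s
  have hs1 := hb (s + 1)
  have e2 : kabs Fq (polyToK Fq q₀ * y) < 1 := by
    rw [kabs_mul, h1, l1]; exact small _ _ (by rw [DD_succ, DD_succ]; lia)
  have e3 : kabs Fq (polyToK Fq q₀ * x) < 1 := by
    rw [kabs_mul, h1, l0]; exact small _ _ (by rw [DD_succ]; lia)
  have e4 : kabs Fq (polyToK Fq q₁ * y) < 1 := by
    rw [kabs_mul, h2, l1]; exact small _ _ (by rw [DD_succ b (s + 1)]; lia)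
  have two : ∀ z : K Fq, kabs Fq z < 1 → kabs Fq (2 * z) < 1 := by
    intro z hz
    rw [two_mul]
    exact lt_of_le_of_lt (kabs_add_le _ _) (max_lt hz hz)
  have key : 2 * polyToK Fq (q₀ ^ 2 + X ^ k * q₁ * q₀ - q₁ ^ 2) * ξ +
      polyToK Fq (-(2 * q₀ * p₀ + X ^ k * (q₁ * p₀ + q₀ * p₁) - 2 * q₁ * p₁)) =
      polyToK Fq (X ^ k) * (polyToK Fq q₁ * x + polyToK Fq q₀ * y) +
        (2 * (polyToK Fq q₀ * x) - 2 * (polyToK Fq q₁ * y)) := by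
    rw [hx, hy]
    simp only [map_sub, map_mul, map_pow, map_add, map_neg, map_ofNat]
    ring
  have e5 : kabs Fq (polyToK Fq (X ^ k) * (polyToK Fq q₁ * x + polyToK Fq q₀ * y)) =
      (Fintype.card Fq : ℝ) ^ k := by
    rw [kabs_mul, hR, kabs_add_eq (by rw [e1]; exact e2), e1, mul_one]
  rw [key, kabs_add_eq, e5]
  rw [e5]
  exact lt_of_lt_of_le (lt_of_le_of_lt (kabs_sub_le _ _) (max_lt (two _ e3) (two _ e4)))
    (one_le_pow₀ hq.le)

end PartH

section PartI

/-- the state `(s, D, κ)` at the beginning of the `n`-th block -/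
def st (c : ℝ) (J : ℕ) : ℕ → ℕ × ℕ × ℕ
  | 0 => (0, 1, 1)
  | (n + 1) =>
    let p := st c J n
    let x := 2 * p.2.1 - p.2.2
    let k := ⌊c * (x : ℝ)⌋₊ + n + 2
    let j := J * (x / k + 1)
    (p.1 + j, p.2.1 + j * k, k)

lemma exists_state (c : ℝ) (hc : 0 ≤ c) (J : ℕ) (hJ : 1 ≤ J) : ∃ s D κ k j x : ℕ → ℕ,
    s 0 = 0 ∧ D 0 = 1 ∧ κ 0 = 1 ∧ (∀ n, x n + κ n = 2 * D n) ∧ (∀ n, κ n ≤ D n) ∧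
    (∀ n, k n = ⌊c * (x n : ℝ)⌋₊ + n + 2) ∧ (∀ n, j n = J * (x n / k n + 1)) ∧
    (∀ n, s (n + 1) = s n + j n) ∧ (∀ n, D (n + 1) = D n + j n * k n) ∧ (∀ n, κ (n + 1) = k n) ∧
    (∀ n, 1 ≤ j n) ∧ (∀ n, x n ≤ x (n + 1)) ∧ StrictMono k ∧ (∀ n, κ n < k n) ∧ (∀ n, 1 ≤ x n) := by
  set D : ℕ → ℕ := fun n => (st c J n).2.1 with hD
  set κ : ℕ → ℕ := fun n => (st c J n).2.2 with hκ
  set x : ℕ → ℕ := fun n => 2 * D n - κ n with hx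
  set k : ℕ → ℕ := fun n => ⌊c * (x n : ℝ)⌋₊ + n + 2 with hk
  set j : ℕ → ℕ := fun n => J * (x n / k n + 1) with hj
  have hj1 : ∀ n, 1 ≤ j n := fun n => Nat.mul_pos hJ (Nat.succ_pos _)
  have hDs : ∀ n, D (n + 1) = D n + j n * k n := fun n => rfl
  have hκs : ∀ n, κ (n + 1) = k n := fun n => rfl
  have hjk : ∀ n, k n ≤ j n * k n := fun n => Nat.le_mul_of_pos_left _ (hj1 n)
  have hle : ∀ n, κ n ≤ D n := by
    intro n
    rcases n with _ | n
    · exact le_refl 1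
    · rw [hDs, hκs]; have := hjk n; lia
  have hD1 : ∀ n, 1 ≤ D n := by
    intro n
    induction n with
    | zero => exact le_refl 1
    | succ n ih => rw [hDs]; lia
  have hxk : ∀ n, x n + κ n = 2 * D n := fun n => by have := hle n; simp only [hx]; lia
  have hxm : ∀ n, x n ≤ x (n + 1) := by
    intro n
    have h1 := hxk n
    have h2 := hxk (n + 1)
    have := hjk n
    rw [hDs, hκs] at h2
    lia
  have hkm : StrictMono k := by
    apply strictMono_nat_of_lt_succ
    intro n
    have h1 : ⌊c * (x n : ℝ)⌋₊ ≤ ⌊c * (x (n + 1) : ℝ)⌋₊ :=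
      Nat.floor_mono (mul_le_mul_of_nonneg_left (by exact_mod_cast hxm n) hc)
    simp only [hk]
    lia
  refine ⟨fun n => (st c J n).1, D, κ, k, j, x, rfl, rfl, rfl, hxk, hle, fun _ => rfl, fun _ => rfl,
    fun _ => rfl, hDs, hκs, hj1, hxm, hkm, ?_, ?_⟩
  · intro n
    rcases n with _ | n
    · change 1 < ⌊_⌋₊ + 0 + 2
      lia
    · rw [hκs]; exact hkm (Nat.lt_succ_self n)
  · intro n
    have := hxk n; have := hle n; have := hD1 n
    lia

open Classical in
/-- digits from blocks -/
def dig (s k : ℕ → ℕ) (i : ℕ) : ℕ :=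
  if h : ∃ n, i ≤ s (n + 1) then (if i = 0 then 1 else k (Nat.find h)) else 1

lemma dig_eq {s k : ℕ → ℕ} (hs : StrictMono s) {n i : ℕ} (h1 : s n < i)
    (h2 : i ≤ s (n + 1)) : dig s k i = k n := by
  classical
  have h : ∃ n, i ≤ s (n + 1) := ⟨n, h2⟩
  rw [dig, dif_pos h, if_neg (by lia)]
  congr 1
  rw [Nat.find_eq_iff]
  refine ⟨h2, fun m hm => ?_⟩
  have : s (m + 1) ≤ s n := hs.monotone hm
  lia

lemma dig_zero (s k : ℕ → ℕ) : dig s k 0 = 1 := by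
  rw [dig, dif_pos ⟨0, Nat.zero_le _⟩, if_pos rfl]

lemma DD_block {b : ℕ → ℕ} {a m k : ℕ} (h : ∀ i, a ≤ i → i < a + m → b i = k) :
    DD b (a + m) = DD b a + m * k := by
  induction m with
  | zero => simp
  | succ m ih =>
    rw [← add_assoc, DD_succ, ih fun i h1 h2 => h i h1 (by lia), h (a + m) (by lia) (by lia)]
    ring

theorem exists_digits (δ : ℝ) (h0 : 0 < δ) (h1 : δ ≤ 1) :
    ∃ (W M : ℝ) (b s k h t : ℕ → ℕ), 1 ≤ W ∧ (∀ i, 1 ≤ b i) ∧ (∀ n, b (s n) < k n) ∧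
      (∀ n, s n ≤ s (n + 1)) ∧
      (∀ n i, s n + 1 ≤ i → i < s (n + 1) + 1 → b i = k n) ∧
      (∀ n, k n < b (s (n + 1) + 1)) ∧
      (∀ n, h n = 2 * DD b (s n) + b (s n) + k n) ∧ (∀ n, t n = 2 * DD b (s (n + 1) + 1)) ∧
      (∀ n, n ≤ h n) ∧
      StrictMono h ∧ (∀ n, (W + 1) * h n ≤ t n) ∧ (∀ n, (t n : ℝ) ≤ M * h n) ∧
      (∀ n, 4 * (h (n + 1) : ℝ) ≤ (W - 1) * (t n - h n)) ∧
      (∀ ε : ℝ, 0 < ε → ∃ B : ℝ, ∀ n, |(k n : ℝ) - (1 - δ) * h n| ≤ ε * h n + B) := by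
  obtain ⟨c, hcdef⟩ : ∃ c : ℝ, c = 1 / δ - 1 := ⟨_, rfl⟩
  have hc : 0 ≤ c := by
    have : 1 ≤ 1 / δ := by rw [le_div_iff₀ h0]; linarith
    linarith
  have hδc : δ * (1 + c) = 1 := by rw [hcdef]; field_simp; ring
  obtain ⟨J, hJ⟩ := exists_nat_ge (2 + 12 * (1 + c))
  have hJ6 : 14 ≤ J := by
    have : (14 : ℝ) ≤ J := by linarith
    exact_mod_cast this
  obtain ⟨s, D, κ, k, j, x, s0, D0, κ0, hxk, hκD, hk, hj, hs, hD, hκ, hj1, hxm, hkm, hκk, hx1⟩ :=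
    exists_state c hc J (by lia)
  have hsm : StrictMono s := strictMono_nat_of_lt_succ fun n => by rw [hs]; have := hj1 n; lia
  set b := dig s k with hb
  have hbk : ∀ n i, s n + 1 ≤ i → i < s (n + 1) + 1 → b i = k n :=
    fun n i h1 h2 => dig_eq hsm (by lia) (by lia)
  have hk2 : ∀ n, n + 2 ≤ k n := fun n => by rw [hk]; lia
  have hbs : ∀ n, b (s n) = κ n := by
    intro n
    rcases n with _ | n
    · rw [s0, κ0]; exact dig_zero _ _
    · rw [hκ]; exact hbk n _ (hsm (Nat.lt_succ_self n)) (Nat.lt_succ_self _)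
  have hDD : ∀ n, DD b (s n + 1) = D n := by
    intro n
    induction n with
    | zero =>
      rw [s0, D0, DD_succ]
      simp only [DD, Finset.range_zero, Finset.sum_empty, zero_add]
      exact dig_zero _ _
    | succ n ih =>
      rw [hD, ← ih, hs, show s n + j n + 1 = (s n + 1) + j n by ring]
      exact DD_block fun i h1 h2 => hbk n i h1 (by rw [hs]; lia)
  have hb1 : ∀ i, 1 ≤ b i := by
    intro i
    rw [hb, dig]
    split_ifs with g1 g2
    · exact le_refl 1
    · have := hk2 (Nat.find g1); lia
    · exact le_refl 1
  set h : ℕ → ℕ := fun n => x n + k n with hh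
  set t : ℕ → ℕ := fun n => 2 * D (n + 1) with ht
  have hJx : ∀ n, J * x n ≤ j n * k n ∧ j n * k n ≤ J * h n ∧ J * k n ≤ j n * k n := by
    intro n
    have hkp : 0 < k n := by have := hk2 n; lia
    have e : j n * k n = J * ((x n / k n + 1) * k n) := by rw [hj]; ring
    have h3 := Nat.div_add_mod (x n) (k n)
    have h4 := Nat.mod_lt (x n) hkp
    have e2 : (x n / k n + 1) * k n = k n * (x n / k n) + k n := by ring
    rw [e]
    refine ⟨Nat.mul_le_mul_left _ ?_, Nat.mul_le_mul_left _ ?_, Nat.mul_le_mul_left _ ?_⟩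
    · lia
    · simp only [hh]; lia
    · lia
  have ht1 : ∀ n, J * h n ≤ t n := by
    intro n
    obtain ⟨g1, g2, g3⟩ := hJx n
    simp only [ht, hh, hD]
    rw [mul_add]
    lia
  have ht2 : ∀ n, t n ≤ (2 * J + 1) * h n := by
    intro n
    obtain ⟨g1, g2, g3⟩ := hJx n
    have := hxk n
    have := hκk n
    simp only [ht, hD]
    have e : (2 * J + 1) * h n = 2 * (J * h n) + h n := by ring
    rw [e]
    have : h n = x n + k n := rfl
    lia
  have hxt : ∀ n, x (n + 1) + k n = t n := by
    intro n
    have := hxk (n + 1)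
    rw [hκ] at this
    exact this
  have hfl : ∀ n, (k n : ℝ) ≤ c * x n + n + 2 ∧ c * x n ≤ k n := by
    intro n
    rw [hk]
    push_cast
    have g1 := Nat.floor_le (mul_nonneg hc (Nat.cast_nonneg (x n)))
    have g2 := Nat.lt_floor_add_one (c * (x n : ℝ))
    constructor
    · linarith
    · linarith [(Nat.cast_nonneg n : (0 : ℝ) ≤ n)]
  have hhn : ∀ n, n + 3 ≤ h n := fun n => by
    have := hk2 n; have := hx1 n; simp only [hh]; lia
  have hhn1 : ∀ n, 5 * h n ≤ h (n + 1) := by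
    intro n
    have g1 := ht1 n
    have g2 := hxt n
    have g3 : 14 * h n ≤ J * h n := Nat.mul_le_mul_right _ hJ6
    have g4 : h n = x n + k n := rfl
    have g5 : h (n + 1) = x (n + 1) + k (n + 1) := rfl
    lia
  have hsq : ∀ n, (n + 1) ^ 2 ≤ h n := by
    intro n
    induction n with
    | zero => have := hhn 0; lia
    | succ n ih =>
      have g1 := hhn1 n
      have g2 : (n + 1 + 1) ^ 2 ≤ 5 * (n + 1) ^ 2 := by ring_nf; lia
      lia
  have hup : ∀ n, (h (n + 1) : ℝ) ≤ ((1 + c) * (2 * J + 1) + 1) * h n := by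
    intro n
    have g1 := (hfl (n + 1)).1
    have g2 : (x (n + 1) : ℝ) ≤ t n := by exact_mod_cast (Nat.le_of_add_right_le (hxt n).le)
    have g3 : (t n : ℝ) ≤ (2 * J + 1) * h n := by exact_mod_cast ht2 n
    have g4 : (n : ℝ) + 3 ≤ h n := by exact_mod_cast hhn n
    have g5 : (h (n + 1) : ℝ) = x (n + 1) + k (n + 1) := by simp [hh]
    push_cast at g1
    rw [g5]
    have g6 : (1 + c) * (x (n + 1) : ℝ) ≤ (1 + c) * ((2 * J + 1) * h n) :=
      mul_le_mul_of_nonneg_left (g2.trans g3) (by linarith)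
    linarith
  refine ⟨1 + 12 * (1 + c), 2 * J + 1, b, s, k, h, t, by linarith, hb1, ?_, ?_, hbk, ?_, ?_, ?_, ?_,
    ?_, ?_, ?_, ?_, ?_⟩
  · intro n; rw [hbs]; exact hκk n
  · intro n; rw [hs]; lia
  · intro n
    rw [hbk (n + 1) (s (n + 1) + 1) le_rfl (by have := hsm (Nat.lt_succ_self (n + 1)); lia)]
    exact hkm (Nat.lt_succ_self n)
  · intro n
    have g1 := hDD n
    have g2 := hbs n
    have g3 := hxk n
    rw [DD_succ] at g1
    simp only [hh]
    lia
  · intro n; rw [hDD]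
  · intro n; have := hhn n; lia
  · apply strictMono_nat_of_lt_succ
    intro n
    have := hhn1 n
    have := hhn n
    lia
  · intro n
    have g1 : (J : ℝ) * h n ≤ t n := by exact_mod_cast ht1 n
    refine le_trans (mul_le_mul_of_nonneg_right ?_ (Nat.cast_nonneg _)) g1
    linarith
  · intro n; exact_mod_cast ht2 n
  · intro n
    have g1 : (J : ℝ) * h n ≤ t n := by exact_mod_cast ht1 n
    have g2 := hup n
    have g3 : (0 : ℝ) ≤ h n := Nat.cast_nonneg _
    have g4 : (14 : ℝ) ≤ J := by exact_mod_cast hJ6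
    have g5 : 4 * ((1 + c) * (2 * J + 1) + 1) ≤ 12 * (1 + c) * (J - 1) := by nlinarith
    calc 4 * (h (n + 1) : ℝ) ≤ (4 * ((1 + c) * (2 * J + 1) + 1)) * h n := by linarith
      _ ≤ (12 * (1 + c) * (J - 1)) * h n := mul_le_mul_of_nonneg_right g5 g3
      _ = (12 * (1 + c)) * (J * h n - h n) := by ring
      _ ≤ (12 * (1 + c)) * (t n - h n) := mul_le_mul_of_nonneg_left (by linarith) (by linarith)
      _ = _ := by ring
  · intro ε hε
    obtain ⟨N, hN⟩ := exists_nat_ge (2 / ε)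
    refine ⟨N + 2, fun n => ?_⟩
    obtain ⟨g1, g2⟩ := hfl n
    have g3 : ((n : ℝ) + 1) ^ 2 ≤ h n := by exact_mod_cast hsq n
    have hn0 : (0 : ℝ) ≤ n := Nat.cast_nonneg n
    have g5 : (n : ℝ) + 2 ≤ ε * h n + (N + 2) := by
      rcases le_total N n with hn | hn
      · have g4 : (2 : ℝ) ≤ ε * (n + 1) := by
          rw [div_le_iff₀ hε] at hN
          have : (N : ℝ) ≤ n := by exact_mod_cast hn
          nlinarith
        have : (0 : ℝ) ≤ N := Nat.cast_nonneg N
        nlinarith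
      · have : (n : ℝ) ≤ N := by exact_mod_cast hn
        have : 0 ≤ ε * h n := by positivity
        linarith
    have g6 : (h n : ℝ) = x n + k n := by simp [hh]
    have e : (k n : ℝ) - (1 - δ) * h n = δ * (k n - c * x n) := by
      rw [g6]; linear_combination (x n : ℝ) * hδc
    rw [e, abs_of_nonneg (mul_nonneg h0.le (by linarith))]
    nlinarith

end PartI

section PartJ
variable {Fq}

variable (Fq) in
/-- real powers of `q` -/
def qe (x : ℝ) : ℝ := (Fintype.card Fq : ℝ) ^ x

lemma qe_pos (x : ℝ) : 0 < qe Fq x := Real.rpow_pos_of_pos (by linarith [one_lt_card (Fq := Fq)]) _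
lemma qe_add (x y : ℝ) : qe Fq (x + y) = qe Fq x * qe Fq y :=
  Real.rpow_add (by linarith [one_lt_card (Fq := Fq)]) _ _
lemma qe_zero : qe Fq 0 = 1 := Real.rpow_zero _
lemma qe_le {x y : ℝ} : qe Fq x ≤ qe Fq y ↔ x ≤ y := Real.rpow_le_rpow_left_iff one_lt_card
lemma qe_lt {x y : ℝ} : qe Fq x < qe Fq y ↔ x < y := Real.rpow_lt_rpow_left_iff one_lt_card
lemma qe_rpow (x y : ℝ) : qe Fq x ^ y = qe Fq (x * y) :=
  (Real.rpow_mul (by linarith [one_lt_card (Fq := Fq)]) _ _).symm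
lemma qe_nat (n : ℕ) : (Fintype.card Fq : ℝ) ^ n = qe Fq n := (Real.rpow_natCast _ _).symm
lemma qe_nat_inv (n : ℕ) : ((Fintype.card Fq : ℝ) ^ n)⁻¹ = qe Fq (-n) := by
  rw [qe, Real.rpow_neg (by positivity), Real.rpow_natCast]
lemma qe_surj {c : ℝ} (hc : 0 < c) : ∃ x, c = qe Fq x := by
  have h1 := one_lt_card (Fq := Fq)
  exact ⟨Real.logb (Fintype.card Fq) c, (Real.rpow_logb (by linarith) (by linarith) hc).symm⟩
lemma qe_surj1 {c : ℝ} (hc : 1 ≤ c) : ∃ x, 0 ≤ x ∧ c = qe Fq x := by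
  obtain ⟨x, hx⟩ := qe_surj (Fq := Fq) (c := c) (by linarith)
  refine ⟨x, ?_, hx⟩
  rwa [hx, ← qe_zero (Fq := Fq), qe_le] at hc

/-- the data extracted from the construction -/
structure Dat (ξ : K Fq) (δ W M : ℝ) (P : ℕ → Fq[X][X]) (h t k : ℕ → ℝ) : Prop where
  irr : ∀ n, Irreducible (P n)
  deg : ∀ n, (P n).natDegree = 2
  H : ∀ n, Hpoly Fq (P n) = qe Fq (h n)
  A : ∀ n, nb ((P n).coeff 2) = qe Fq (h n)
  ev : ∀ n, kabs Fq (evalK Fq (P n) ξ) = qe Fq (-(t n))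
  der : ∀ n, kabs Fq (2 * polyToK Fq ((P n).coeff 2) * ξ + polyToK Fq ((P n).coeff 1)) = qe Fq (k n)
  xi : kabs Fq ξ ≤ 1
  hW : 1 ≤ W
  hk : ∀ n, 0 ≤ k n
  hn : ∀ n : ℕ, (n : ℝ) ≤ h n
  low : ∀ n, (W + 1) * h n ≤ t n
  up : ∀ n, t n ≤ M * h n
  jump : ∀ n, 4 * h (n + 1) ≤ (W - 1) * (t n - h n)
  eps : ∀ ε > 0, ∃ B : ℝ, ∀ n, |k n - (1 - δ) * h n| ≤ ε * h n + B

lemma assoc_data {P Q : Fq[X][X]} (h : Associated P Q) (ξ : K Fq) :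
    Hpoly Fq P = Hpoly Fq Q ∧ kabs Fq (evalK Fq P ξ) = kabs Fq (evalK Fq Q ξ) ∧
    ∀ α, evalL Fq P α = 0 → evalL Fq Q α = 0 := by
  obtain ⟨u, rfl⟩ := h
  obtain ⟨a, ha, hu⟩ := Polynomial.isUnit_iff.1 u.isUnit
  have h1 := nb_unit ha
  rw [← hu]
  refine ⟨?_, ?_, fun α hα => ?_⟩
  · rw [Hpoly_mul, Hpoly_C, h1, mul_one]
  · rw [evalK_mul, kabs_mul]
    have : evalK Fq (C a) ξ = polyToK Fq a := by rw [evalK, eval₂_C]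
    rw [this, show kabs Fq (polyToK Fq a) = 1 from h1, mul_one]
  · rw [evalL] at hα ⊢
    rw [eval₂_mul, hα, zero_mul]

variable {ξ : K Fq} {δ W M : ℝ} {P : ℕ → Fq[X][X]} {h t k : ℕ → ℝ}

lemma Dat.h_nonneg (D : Dat ξ δ W M P h t k) (n : ℕ) : 0 ≤ h n :=
  le_trans (Nat.cast_nonneg n) (D.hn n)

lemma Dat.far (D : Dat ξ δ W M P h t k) : ∃ c : ℝ, ∀ R : Fq[X][X], Irreducible R →
    R.natDegree ≠ 0 → R.natDegree ≤ 2 → (∀ n, ¬ Associated R (P n)) →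
    ∀ y, 0 ≤ y → Hpoly Fq R = qe Fq y → qe Fq (c - W * y) ≤ kabs Fq (evalK Fq R ξ) := by
  refine ⟨-2 * h 0, fun R hR hR0 hR2 hna y hy hH => ?_⟩
  have hW := D.hW
  have hex : ∃ n, 2 * y < t n - h n := by
    obtain ⟨n, hn⟩ := exists_nat_gt (2 * y)
    refine ⟨n, ?_⟩
    have h1 := D.low n
    have h2 := D.hn n
    have h3 := D.h_nonneg n
    nlinarith
  have key : ∀ n, 2 * y < t n - h n → qe Fq (-y - 2 * h n) ≤ kabs Fq (evalK Fq R ξ) := by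
    intro n hn
    have hL := liouville hR hR0 hR2 (D.irr n) (D.deg n) (hna n) D.xi
    rw [hH, D.H, D.ev, mul_max_of_nonneg _ _ (mul_pos (qe_pos _) (qe_pos _)).le] at hL
    rcases le_max_iff.1 hL with h1 | h1
    · rw [← qe_add, ← qe_add, ← qe_add, ← qe_zero (Fq := Fq), qe_le] at h1
      linarith
    · rw [← mul_assoc, ← qe_add, ← qe_add] at h1
      have h2 : qe Fq (-y - 2 * h n) * qe Fq (y + h n + h n) = 1 := by
        rw [← qe_add, ← qe_zero (Fq := Fq)]; congr 1; ring
      have h3 := qe_pos (Fq := Fq) (-y - 2 * h n)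
      calc qe Fq (-y - 2 * h n) ≤ qe Fq (-y - 2 * h n) *
            (qe Fq (y + h n + h n) * kabs Fq (evalK Fq R ξ)) := le_mul_of_one_le_right h3.le h1
        _ = _ := by rw [← mul_assoc, h2, one_mul]
  classical
  have hs := Nat.find_spec hex
  have hm : ∀ m, m < Nat.find hex → ¬ (2 * y < t m - h m) := fun m hm => Nat.find_min hex hm
  generalize Nat.find hex = n at hs hm
  refine le_trans (qe_le.2 ?_) (key n hs)
  have h0 := D.h_nonneg 0
  rcases n with _ | m
  · nlinarith
  · have h1 := hm m (by lia)
    rw [not_lt] at h1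
    have h2 := D.jump m
    have h3 : (W - 1) * (t m - h m) ≤ (W - 1) * (2 * y) :=
      mul_le_mul_of_nonneg_left h1 (by linarith)
    nlinarith

lemma Dat.Lo_of_t (D : Dat ξ δ W M P h t k) {w B : ℝ} (hw : W ≤ w)
    (hB : ∀ n, t n ≤ w * h n + B) : Lo 2 ξ w := by
  have hW := D.hW
  obtain ⟨c, hc⟩ := D.far
  refine Lo_of_irr (by linarith) ⟨qe Fq (min c (-B)), qe_pos _, fun R hR2 hR0 hR _ => ?_⟩
  obtain ⟨y, hy, hH⟩ := qe_surj1 (Fq := Fq) (Hpoly_ge_one hR.ne_zero)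
  rw [hH, qe_rpow, ← qe_add]
  by_cases hna : ∀ n, ¬ Associated R (P n)
  · refine le_trans (qe_le.2 ?_) (hc R hR hR0 hR2 hna y hy hH)
    have := min_le_left c (-B)
    nlinarith
  · push Not at hna
    obtain ⟨n, hn⟩ := hna
    obtain ⟨e1, e2, _⟩ := assoc_data hn ξ
    rw [e2, D.ev, qe_le]
    have hyh : y = h n := by
      rw [hH, D.H] at e1
      exact le_antisymm (qe_le.1 e1.le) (qe_le.1 e1.ge)
    have := min_le_right c (-B)
    have := hB n
    rw [hyh]
    linarith

lemma Dat.W_le (D : Dat ξ δ W M P h t k) {w B : ℝ}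
    (hB : ∀ n, t n ≤ w * h n + B) : W + 1 ≤ w := by
  by_contra hlt
  rw [not_le] at hlt
  obtain ⟨n, hn⟩ := exists_nat_gt (B / (W + 1 - w))
  rw [div_lt_iff₀ (by linarith)] at hn
  have h1 := D.low n
  have h2 := hB n
  have h3 := D.hn n
  nlinarith

lemma Dat.fin (D : Dat ξ δ W M P h t k) : wExp Fq 2 ξ ≠ ⊤ := by
  have hB : ∀ n, t n ≤ M * h n + 0 := fun n => by linarith [D.up n]
  have h1 := wExp_le_of_Lo (D.Lo_of_t (by linarith [D.W_le hB]) hB)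
  exact ne_top_of_le_ne_top (EReal.coe_ne_top M) h1

lemma Dat.partb (D : Dat ξ δ W M P h t k) (hδ : δ ≤ 1) {v : L Fq → ℝ} (hv : IsAbsExt Fq v) {s ε : ℝ}
    (hε : 0 < ε) (hs : wStarExp Fq v 2 ξ < (s : EReal)) :
    wExp Fq 2 ξ ≤ ((s + δ + ε : ℝ) : EReal) := by
  obtain ⟨c, hc, hL⟩ := LoS_of_wStar_lt hv hs
  obtain ⟨B, hB⟩ := D.eps ε hε
  obtain ⟨c', rfl⟩ := qe_surj (Fq := Fq) hc
  have key : ∀ n, t n ≤ (s + δ + ε) * h n + (B - c') := by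
    intro n
    have hd2 := D.deg n
    obtain ⟨α, β, hα, hαβ⟩ : ∃ α β : L Fq, evalL Fq (P n) α = 0 ∧
        (φ Fq ((P n).coeff 1) = -φ Fq ((P n).coeff 2) * (α + β) ∧
          φ Fq ((P n).coeff 0) = φ Fq ((P n).coeff 2) * (α * β)) ∧
        qe Fq (k n) ≤ v (φ Fq ((P n).coeff 2) * (toL Fq ξ - β)) := by
      obtain ⟨α, hα⟩ := exists_root (P := P n) (by lia)
      obtain ⟨β, h1, h2, h3⟩ := quad_factor hd2 hα
      have e : toL Fq (2 * polyToK Fq ((P n).coeff 2) * ξ + polyToK Fq ((P n).coeff 1)) =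
          φ Fq ((P n).coeff 2) * (toL Fq ξ - α) + φ Fq ((P n).coeff 2) * (toL Fq ξ - β) := by
        have e1 : ∀ a, toL Fq (polyToK Fq a) = φ Fq a := fun a => rfl
        rw [map_add, map_mul, map_mul, e1, e1, h1, map_ofNat]
        ring
      have h4 := D.der n
      rw [← hv.extends_kabs, e] at h4
      have h5 := hv.add_le (φ Fq ((P n).coeff 2) * (toL Fq ξ - α))
        (φ Fq ((P n).coeff 2) * (toL Fq ξ - β))
      rw [h4] at h5
      rcases le_max_iff.1 h5 with h6 | h6
      · exact ⟨β, α, h3, ⟨by rw [h1]; ring, by rw [h2]; ring⟩, h6⟩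
      · exact ⟨α, β, hα, ⟨h1, h2⟩, h6⟩
    obtain ⟨⟨h1, h2⟩, h6⟩ := hαβ
    have e : toL Fq (evalK Fq (P n) ξ) =
        (toL Fq ξ - α) * (φ Fq ((P n).coeff 2) * (toL Fq ξ - β)) := by
      rw [← evalL_toL, evalL_quad hd2.le, h1, h2]; ring
    have hev := D.ev n
    rw [← hv.extends_kabs, e, hv.map_mul] at hev
    obtain ⟨ha, hd, hh⟩ := alg_of_irr (D.irr n) (by lia) hα
    have hne : α ≠ toL Fq ξ := by
      rintro rfl
      rw [sub_self, v_zero hv, zero_mul] at hev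
      exact (qe_pos _).ne hev
    have h7 := hL α ha (by lia) hne
    rw [hh, D.H, qe_rpow, ← qe_add] at h7
    have h8 : qe Fq (c' + h n * (-s - 1)) * qe Fq (k n) ≤ qe Fq (-(t n)) := by
      rw [← hev]
      exact mul_le_mul h7 h6 (qe_pos _).le (hv.nonneg _)
    rw [← qe_add, qe_le] at h8
    have h9 := (abs_le.1 (hB n)).1
    linarith
  exact wExp_le_of_Lo (D.Lo_of_t (by linarith [D.W_le key]) key)

lemma Dat.parta (D : Dat ξ δ W M P h t k) (hδ : δ ≤ 1) {v : L Fq → ℝ} (hv : IsAbsExt Fq v) {s ε : ℝ}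
    (hε : 0 < ε) (hs : wExp Fq 2 ξ < (s : EReal)) :
    wStarExp Fq v 2 ξ ≤ ((s - δ + ε : ℝ) : EReal) := by
  have hW := D.hW
  obtain ⟨c, hc, hL⟩ := Lo_of_wExp_lt hs
  obtain ⟨B, hB⟩ := D.eps ε hε
  obtain ⟨c', rfl⟩ := qe_surj (Fq := Fq) hc
  obtain ⟨c₀, hfar⟩ := D.far
  have ht : ∀ n, t n ≤ s * h n + (-c') := by
    intro n
    have h1 := hL (P n) (D.deg n).le (by
      intro h0
      have := D.ev n
      rw [h0, kabs_zero] at this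
      exact (qe_pos _).ne this)
    rw [D.H, D.ev, qe_rpow, ← qe_add, qe_le] at h1
    linarith
  have hsW := D.W_le ht
  obtain ⟨d, hd0, hd1, hd2⟩ : ∃ d : ℝ, d ≤ 0 ∧ d ≤ c₀ ∧ d ≤ c' - B :=
    ⟨min 0 (min c₀ (c' - B)), min_le_left _ _, (min_le_right _ _).trans (min_le_left _ _),
      (min_le_right _ _).trans (min_le_right _ _)⟩
  refine wStar_le_of_LoS hv Set.finite_empty (c := qe Fq d) (qe_pos _) ?_
  intro α ha hdeg hne _
  obtain ⟨m1, m2, m3, m4, m5⟩ := minPolyPrim_spec ha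
  have hH1 := heightAlg_ge_one ha
  obtain ⟨y, hy, hH⟩ := qe_surj1 (Fq := Fq) hH1
  rw [hH, qe_rpow, ← qe_add]
  have hy' : 0 ≤ y * (s - δ + ε) := mul_nonneg hy (by linarith)
  by_cases hna : ∀ n, ¬ Associated (minPolyPrim Fq α) (P n)
  · rcases le_or_gt (v (toL Fq ξ - α)) 1 with h1 | h1
    · have h2 := hfar _ m2 m1.ne' hdeg hna y hy hH
      have h3 := v_eval_le hv hdeg m5 h1
      rw [max_eq_right D.xi, mul_one, show Hpoly Fq (minPolyPrim Fq α) = _ from hH] at h3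
      have h4 := h2.trans h3
      have h5 : qe Fq (c₀ - W * y) = qe Fq (c₀ - W * y - y) * qe Fq y := by
        rw [← qe_add]; congr 1; ring
      rw [h5] at h4
      refine le_trans (qe_le.2 ?_) (le_of_mul_le_mul_right h4 (qe_pos _))
      have : W * y ≤ (s - δ + ε) * y := mul_le_mul_of_nonneg_right (by linarith) hy
      linarith
    · refine le_trans ((qe_le (y := 0)).2 ?_) ((qe_zero (Fq := Fq)).le.trans h1.le)
      linarith
  · push Not at hna
    obtain ⟨n, hn⟩ := hna
    obtain ⟨e1, _, e3⟩ := assoc_data hn ξ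
    have hyh : y = h n := by
      rw [show Hpoly Fq (minPolyPrim Fq α) = _ from hH, D.H] at e1
      exact le_antisymm (qe_le.1 e1.le) (qe_le.1 e1.ge)
    have hα := e3 α m5
    have hk := D.hk n
    have htn := ht n
    have h9 := (abs_le.1 (hB n)).2
    subst hyh
    rcases le_or_gt (qe Fq (k n - h n)) (v (toL Fq ξ - α)) with h1 | h1
    · refine le_trans (qe_le.2 ?_) h1
      linarith
    · have e : toL Fq (evalK Fq (P n) ξ) = (toL Fq ξ - α) *
          (toL Fq (2 * polyToK Fq ((P n).coeff 2) * ξ + polyToK Fq ((P n).coeff 1)) -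
            φ Fq ((P n).coeff 2) * (toL Fq ξ - α)) := by
        have q1 : ∀ a, toL Fq (polyToK Fq a) = φ Fq a := fun a => rfl
        rw [← evalL_toL, evalL_quad (D.deg n).le, map_add, map_mul, map_mul, q1, q1, map_ofNat]
        rw [evalL_quad (D.deg n).le] at hα
        linear_combination hα
      have hev := D.ev n
      rw [← hv.extends_kabs, e, hv.map_mul] at hev
      have h2 : v (toL Fq (2 * polyToK Fq ((P n).coeff 2) * ξ + polyToK Fq ((P n).coeff 1)) -
            φ Fq ((P n).coeff 2) * (toL Fq ξ - α)) ≤ qe Fq (k n) := by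
        refine (v_sub_le hv _ _).trans (max_le ?_ ?_)
        · rw [hv.extends_kabs, D.der]
        · rw [hv.map_mul, v_φ hv, D.A]
          have := mul_le_mul_of_nonneg_left h1.le (qe_pos (Fq := Fq) (h n)).le
          rw [← qe_add] at this
          refine this.trans (qe_le.2 ?_)
          linarith
      have h3 := mul_le_mul_of_nonneg_left h2 (hv.nonneg (toL Fq ξ - α))
      rw [hev, show -(t n) = (-(t n) - k n) + k n by ring, qe_add] at h3
      refine le_trans (qe_le.2 ?_) (le_of_mul_le_mul_right h3 (qe_pos _))
      linarith

lemma Dat.main (D : Dat ξ δ W M P h t k) (hδ : δ ≤ 1) {v : L Fq → ℝ} (hv : IsAbsExt Fq v) :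
    wExp Fq 2 ξ = wStarExp Fq v 2 ξ + (δ : EReal) := by
  apply le_antisymm
  · refine EReal.le_of_forall_lt_iff_le.1 fun r hr => ?_
    have h1 : wStarExp Fq v 2 ξ < ((r - δ : ℝ) : EReal) := by
      rw [EReal.coe_sub]
      exact (EReal.lt_sub_iff_add_lt (Or.inl (EReal.coe_ne_bot _)) (Or.inl (EReal.coe_ne_top _))).2 hr
    obtain ⟨s, hs1, hs2⟩ := EReal.lt_iff_exists_real_btwn.1 h1
    rw [EReal.coe_lt_coe_iff] at hs2
    have := D.partb hδ hv (ε := r - δ - s) (by linarith) hs1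
    rwa [show s + δ + (r - δ - s) = r by ring] at this
  · refine EReal.le_of_forall_lt_iff_le.1 fun s hs => ?_
    have h1 : wStarExp Fq v 2 ξ ≤ ((s - δ : ℝ) : EReal) := by
      refine EReal.le_of_forall_lt_iff_le.1 fun r hr => ?_
      rw [EReal.coe_lt_coe_iff] at hr
      have := D.parta hδ hv (ε := r - (s - δ)) (by linarith) hs
      rwa [show s - δ + (r - (s - δ)) = r by ring] at this
    have h2 := add_le_add_left h1 (δ : EReal)
    rwa [← EReal.coe_add, sub_add_cancel] at h2

lemma case_pos {v : L Fq → ℝ} (hv : IsAbsExt Fq v) {δ : ℝ} (h0 : 0 < δ) (hδ : δ ≤ 1) :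
    ∃ ξ : K Fq, wExp Fq 2 ξ ≠ ⊤ ∧ wStarExp Fq v 2 ξ ≠ ⊤ ∧
      wExp Fq 2 ξ = wStarExp Fq v 2 ξ + (δ : EReal) := by
  obtain ⟨W, M, b, s, k, h, t, hW, hb, hbs, hs, hbk, hkb, hh, ht, hn, _, low, up, jump, eps⟩ :=
    exists_digits δ h0 hδ
  obtain ⟨ξ, hξ⟩ := exists_cf (Fq := Fq) hb
  have hcf : IsCF Fq b ξ := hξ
  have D : Dat ξ δ W M (fun n => PN Fq b (s n + 1) (k n)) (fun n => (h n : ℝ)) (fun n => (t n : ℝ))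
      (fun n => (k n : ℝ)) :=
    { irr := fun n => (PN_spec hb (hbs n)).1
      deg := fun n => (PN_spec hb (hbs n)).2.1
      H := fun n => by rw [(PN_spec hb (hbs n)).2.2.1, ← hh n, qe_nat]
      A := fun n => by rw [(PN_spec hb (hbs n)).2.2.2, ← hh n, qe_nat]
      ev := fun n => by
        rw [PN_eval (e := s (n + 1) + 1) (by linarith [hs n]) (hbk n) (hkb n) hcf, ← ht n,
          qe_nat_inv]
      der := fun n => by rw [PN_deriv hb hcf, qe_nat]
      xi := cf_le_one hcf
      hW := hW
      hk := fun n => Nat.cast_nonneg _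
      hn := fun n => by exact_mod_cast hn n
      low := low
      up := up
      jump := jump
      eps := eps }
  exact ⟨ξ, D.fin, ne_top_of_le_ne_top D.fin (wStar_le_wExp hv ξ), D.main hδ hv⟩

end PartJ

theorem stmt2 (Fq : Type) [Field Fq] [Fintype Fq]
    (v : L Fq → ℝ) (hv : IsAbsExt Fq v) :
    (∀ ξ : K Fq, wExp Fq 2 ξ ≠ ⊤ →
      wStarExp Fq v 2 ξ ≤ wExp Fq 2 ξ ∧ wExp Fq 2 ξ ≤ wStarExp Fq v 2 ξ + 1) ∧
    (∀ δ : ℝ, 0 ≤ δ → δ ≤ 1 → ∃ ξ : K Fq,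
      wExp Fq 2 ξ ≠ ⊤ ∧ wStarExp Fq v 2 ξ ≠ ⊤ ∧
      wExp Fq 2 ξ = wStarExp Fq v 2 ξ + ((δ : ℝ) : EReal)) := by
  refine ⟨fun ξ _ => ⟨wStar_le_wExp hv ξ, wExp_le_wStar hv ξ⟩, fun δ h0 h1 => ?_⟩
  rcases h0.eq_or_lt with rfl | h0
  · obtain ⟨e1, e2, e3⟩ := case_zero hv
    exact ⟨0, e1, e2, by rw [EReal.coe_zero, add_zero, e3]⟩
  · exact case_pos hv h0 h1

end Ooto
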